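/- arXiv:2006.05511 — 3 statements merged into one kernel-verified Lean document; each statement's English description precedes it below -/
import Mathlib

section
/- Let n be odd and let G be a connected well-covered unicyclic graph of order n. If 5 ≤ n ≤ 7, then ξ(C_n) ≤ ξ(G) ≤ ξ(M_n). If n ≥ 9, then ξ(H) ≤ ξ(G) ≤ ξ(M_n) for every graph H of order n in the family S_P. -/
/-!
Pairing vertices with pendant neighbours turns the statement into one about trees.

*Structure.* A well-covered unicyclic graph of odd order is built from a cycle of length `3`, `5`
or `7` by repeatedly adding a pendant edge `uv` whose vertex `u` is joined to one earlier vertex,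
either on the cycle or itself of type `u` (`OddInv.built`). Indeed, a vertex `u` of degree two with
a leaf `v` can be deleted together with `v`, preserving all hypotheses; if there is no such pair,
a count of degrees and well-coveredness show that the graph is a cycle (`OddInv.regular`), and
well-coveredness restricts its length (`OddInv.cycle`). Well-coveredness further restricts which cycle vertices can
carry an attachment, and excludes attachments to a `7`-cycle.

*Reduction to trees.* Apart from `C_7`, the graph of order `2m - 1` therefore satisfies
`I(G, x) = (1 + x)^(m - 1) * I(T, -l)` with `l = -x / (1 + x)` and `T` a tree of order `m`
(`OddInv.treeRep`, `TreeRep.repF`). For `G(g,k,ℓ)` and `C_5` the tree is the path, for `M_n` it is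
the star centred at the triangle vertex of high degree, and `I(C_7, x)` is the function represented
by the path on four vertices minus `x ^ 3`.

*Trees.* A tree is encoded as an `RT`, obtained by joining rooted trees along edges. If a tree is
positive on `[-l, 0]` then so are all its constituents (`RT.good_of_val_pos`), and comparison with
the path and the star by induction over the joins (`RT.Good.path_le`, `RT.good_of_star`) shows
that among the trees of order `m` the path has the smallest and the star the largest value of `ξ`.
The lemma `xi_le_xi` turns these comparisons of positivity into comparisons of the largest root.
-/


open Polynomial SimpleGraph

/-- A finset of vertices is independent: pairwise nonadjacent. -/
def IsIndepFinset {V : Type*} (G : SimpleGraph V) (s : Finset V) : Prop :=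
  ∀ u ∈ s, ∀ v ∈ s, ¬ G.Adj u v

open Classical in
/-- The independence polynomial of a finite graph, with real coefficients. -/
noncomputable def indepPoly {V : Type*} [Fintype V] (G : SimpleGraph V) : Polynomial ℝ :=
  ∑ s : Finset V, if IsIndepFinset G s then (X : Polynomial ℝ) ^ s.card else 0

/-- `xi G` : the largest real root of the independence polynomial of `G`. -/
noncomputable def xi {V : Type*} [Fintype V] (G : SimpleGraph V) : ℝ :=
  sSup {x : ℝ | (indepPoly G).eval x = 0}

/-- `Pre H G` (`H ⪯ G`) : `I(H,x) ≥ I(G,x)` for all `x ∈ [ξ(G), 0]`. -/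
def Pre {V W : Type*} [Fintype V] [Fintype W] (H : SimpleGraph W) (G : SimpleGraph V) : Prop :=
  ∀ x ∈ Set.Icc (xi G) 0, (indepPoly G).eval x ≤ (indepPoly H).eval x

/-- `SPre H G` (`H ≺ G`). -/
def SPre {V W : Type*} [Fintype V] [Fintype W] (H : SimpleGraph W) (G : SimpleGraph V) : Prop :=
  Pre H G ∧ indepPoly H ≠ indepPoly G

open Classical in
/-- A graph is well-covered if all maximal independent sets have the same size. -/
def WellCovered {V : Type*} (G : SimpleGraph V) : Prop :=
  ∀ s t : Finset V,
    IsIndepFinset G s → (∀ v ∉ s, ¬ IsIndepFinset G (insert v s)) →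
    IsIndepFinset G t → (∀ v ∉ t, ¬ IsIndepFinset G (insert v t)) →
    s.card = t.card

/-- A connected unicyclic graph: connected with as many edges as vertices. -/
def Unicyclic {V : Type*} [Fintype V] (G : SimpleGraph V) : Prop :=
  G.Connected ∧ G.edgeSet.ncard = Fintype.card V

/-- The graph star (corona with `K₁`) of `G`: each vertex `inl v` gets a pendant
vertex `inr v`. -/
def corona {V : Type*} (G : SimpleGraph V) : SimpleGraph (V ⊕ V) :=
  SimpleGraph.fromRel (fun a b =>
    match a, b with
    | Sum.inl u, Sum.inl v => G.Adj u v
    | Sum.inl u, Sum.inr v => u = v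
    | _, _ => False)

/-- `Ugraph n` (`U_n`, `n ≥ 3`): a triangle `0,1,2` with `n - 3` pendant vertices attached
to vertex `0`. -/
def Ugraph (n : ℕ) : SimpleGraph (Fin n) :=
  SimpleGraph.fromRel (fun i j => i.val = 0 ∨ (i.val = 1 ∧ j.val = 2))

/-- `Dgraph n` (`D_n`, `n ≥ 4`): a path `0,1,...,n-1` plus the chord `{0,2}`, i.e. a
triangle with a path on `n - 3` vertices attached. -/
def Dgraph (n : ℕ) : SimpleGraph (Fin n) :=
  SimpleGraph.fromRel (fun i j => j.val = i.val + 1 ∨ (i.val = 0 ∧ j.val = 2))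

/-- `starGraph n` (`S_n = K_{1,n-1}`): vertex `0` adjacent to all other vertices. -/
def starGraph (n : ℕ) : SimpleGraph (Fin n) :=
  SimpleGraph.fromRel (fun i _ => i.val = 0)

/-- `Mgraph n` (`M_n`, odd `n ≥ 5`): a triangle `0,1,2` with `(n-3)/2` paths of length two
attached at vertex `0`; the middle vertices are the odd indices `3,5,...,n-2` and the leaf
attached to middle vertex `i` is `i + 1`. -/
def Mgraph (n : ℕ) : SimpleGraph (Fin n) :=
  SimpleGraph.fromRel (fun i j =>
    (i.val = 0 ∧ (j.val ≤ 2 ∨ j.val % 2 = 1)) ∨ (i.val = 1 ∧ j.val = 2) ∨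
    (i.val % 2 = 1 ∧ 3 ≤ i.val ∧ j.val = i.val + 1))

/-- `SPgraph g k ℓ` (`G(g,k,ℓ)`, for `g ∈ {3,5}` and `k + ℓ ≥ 1`): a cycle on the vertices
`0,...,g-1`, a copy of `P_k*` on the vertices `g,...,g+2k-1` (path vertices at even offsets,
each followed by its pendant vertex) joined to the cycle vertex `0` by an edge to the
path end `g`, and a copy of `P_ℓ*` on the vertices `g+2k,...,g+2k+2ℓ-1` joined to the cycle
vertex `2` by an edge to the path end `g+2k`. -/
def SPgraph (g k ℓ : ℕ) : SimpleGraph (Fin (g + 2*k + 2*ℓ)) :=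
  SimpleGraph.fromRel (fun i j =>
    (i.val < g ∧ j.val < g ∧ (j.val = i.val + 1 ∨ (i.val = 0 ∧ j.val = g - 1))) ∨
    (i.val = 0 ∧ 0 < k ∧ j.val = g) ∨
    (g ≤ i.val ∧ i.val < g + 2*k ∧ (i.val - g) % 2 = 0 ∧
      (j.val = i.val + 1 ∨ (j.val = i.val + 2 ∧ j.val < g + 2*k))) ∨
    (i.val = 2 ∧ 0 < ℓ ∧ j.val = g + 2*k) ∨
    (g + 2*k ≤ i.val ∧ (i.val - (g + 2*k)) % 2 = 0 ∧
      (j.val = i.val + 1 ∨ j.val = i.val + 2)))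

/-- `Gtree n` (`G_{2n}`, `n ≥ 5`): the tree on `2n` vertices with path `v_1 … v_n` at
indices `0,…,n-1`, `z_1` at index `n`, `y_1, y_2` at `n+1, n+2`, `x_1, x_2` at `n+3, n+4`
(with `v_3 z_1`, `v_3 y_1`, `y_1 y_2`, `v_5 x_1`, `x_1 x_2` edges), and pendant vertices
`w_j` at index `n + j - 1` attached to `v_j` for `6 ≤ j ≤ n`. -/
def Gtree (n : ℕ) : SimpleGraph (Fin (2*n)) :=
  SimpleGraph.fromRel (fun a b =>
    (a.val + 1 = b.val ∧ b.val < n) ∨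
    (a.val = 2 ∧ (b.val = n ∨ b.val = n + 1)) ∨
    (a.val = n + 1 ∧ b.val = n + 2) ∨
    (a.val = 4 ∧ b.val = n + 3) ∨
    (a.val = n + 3 ∧ b.val = n + 4) ∨
    (5 ≤ a.val ∧ a.val < n ∧ b.val = n + a.val))

/-! ### Independence polynomials of induced subgraphs -/

section
open Classical
set_option linter.unusedSectionVars false

/-- The value at `x` of the independence polynomial of the subgraph of `G` induced on `S`. -/
noncomputable def IP {V : Type*} (G : SimpleGraph V) (S : Finset V) (x : ℝ) : ℝ :=
  ∑ s ∈ S.powerset, if IsIndepFinset G s then x ^ s.card else 0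

lemma eval_indepPoly {V : Type*} [Fintype V] (G : SimpleGraph V) (x : ℝ) :
    (indepPoly G).eval x = IP G Finset.univ x := by
  unfold indepPoly IP
  rw [eval_finsetSum, Finset.powerset_univ]
  refine Finset.sum_congr rfl fun s _ => ?_
  split_ifs <;> simp

lemma eval_indepPoly_iso {V W : Type*} [Fintype V] [Fintype W] {G : SimpleGraph V}
    {H : SimpleGraph W} (e : G ≃g H) : indepPoly G = indepPoly H := by
  unfold indepPoly
  refine Fintype.sum_equiv (Equiv.finsetCongr e.toEquiv) _ _ fun s => ?_
  have hi : IsIndepFinset G s ↔ IsIndepFinset H (Equiv.finsetCongr e.toEquiv s) := by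
    simp only [IsIndepFinset, Equiv.finsetCongr_apply, Finset.forall_mem_map]
    exact forall₂_congr fun u _ => forall₂_congr fun v _ => not_congr e.map_adj_iff.symm
  have hc : (Equiv.finsetCongr e.toEquiv s).card = s.card := by simp
  rw [hc]
  by_cases h : IsIndepFinset G s
  · rw [if_pos h, if_pos (hi.1 h)]
  · rw [if_neg h, if_neg (fun h' => h (hi.2 h'))]

variable {V : Type*} [DecidableEq V] {G : SimpleGraph V}

lemma isIndep_mono {s t : Finset V} (h : s ⊆ t) (ht : IsIndepFinset G t) : IsIndepFinset G s :=
  fun u hu v hv => ht u (h hu) v (h hv)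

lemma isIndep_insert {s : Finset V} {v : V} :
    IsIndepFinset G (insert v s) ↔ IsIndepFinset G s ∧ ∀ u ∈ s, ¬ G.Adj v u := by
  constructor
  · intro h
    exact ⟨isIndep_mono (Finset.subset_insert _ _) h,
      fun u hu => h v (Finset.mem_insert_self _ _) u (Finset.mem_insert_of_mem hu)⟩
  · rintro ⟨h1, h2⟩ a ha b hb hab
    rw [Finset.mem_insert] at ha hb
    rcases ha with rfl | ha <;> rcases hb with rfl | hb
    · exact G.loopless.irrefl _ hab
    · exact h2 b hb hab
    · exact h2 a ha hab.symm
    · exact h1 a ha b hb hab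

lemma IP_empty (x : ℝ) : IP G ∅ x = 1 := by
  simp [IP, IsIndepFinset]

lemma IP_insert {S : Finset V} {v : V} (hv : v ∉ S) (x : ℝ) :
    IP G (insert v S) x = IP G S x + x * IP G (S.filter fun u => ¬ G.Adj v u) x := by
  unfold IP
  rw [Finset.sum_powerset_insert hv]
  congr 1
  rw [Finset.mul_sum]
  symm
  have hsub : (S.filter fun u => ¬ G.Adj v u).powerset ⊆ S.powerset :=
    Finset.powerset_mono.2 (Finset.filter_subset _ _)
  rw [← Finset.sum_subset hsub]
  · refine Finset.sum_congr rfl fun s hs => ?_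
    rw [Finset.mem_powerset] at hs
    have hvs : v ∉ s := fun h => hv (Finset.filter_subset _ _ (hs h))
    have : IsIndepFinset G (insert v s) ↔ IsIndepFinset G s := by
      rw [isIndep_insert]
      exact ⟨fun h => h.1, fun h => ⟨h, fun u hu => (Finset.mem_filter.1 (hs hu)).2⟩⟩
    simp only [this, Finset.card_insert_of_notMem hvs]
    split_ifs
    · ring
    · simp
  · intro s hs hns
    rw [if_neg]
    intro h
    rw [isIndep_insert] at h
    apply hns
    rw [Finset.mem_powerset] at hs ⊢
    exact fun u hu => Finset.mem_filter.2 ⟨hs hu, h.2 u hu⟩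

lemma IP_erase {S : Finset V} {v : V} (hv : v ∈ S) (x : ℝ) :
    IP G S x = IP G (S.erase v) x + x * IP G (S.filter fun u => u ≠ v ∧ ¬ G.Adj v u) x := by
  conv_lhs => rw [← Finset.insert_erase hv]
  rw [IP_insert (Finset.notMem_erase v S)]
  congr 3
  ext u; simp; tauto

/-- Vertex sets without edges between them contribute independently. -/
lemma IP_union {S T : Finset V} (hd : Disjoint S T) (h : ∀ a ∈ S, ∀ b ∈ T, ¬ G.Adj a b) (x : ℝ) :
    IP G (S ∪ T) x = IP G S x * IP G T x := by
  induction hn : T.card using Nat.strong_induction_on generalizing T with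
  | _ n ih =>
    rcases T.eq_empty_or_nonempty with rfl | ⟨v, hv⟩
    · simp [IP_empty]
    · have e1 : (S ∪ T).erase v = S ∪ T.erase v := by
        ext u
        have : u = v → u ∉ S := fun e hu => Finset.disjoint_left.1 hd hu (e ▸ hv)
        simp; tauto
      have e2 : ((S ∪ T).filter fun u => u ≠ v ∧ ¬ G.Adj v u)
          = S ∪ (T.filter fun u => u ≠ v ∧ ¬ G.Adj v u) := by
        ext u
        have h1 : u = v → u ∉ S := fun e hu => Finset.disjoint_left.1 hd hu (e ▸ hv)
        have h2 : u ∈ S → ¬ G.Adj v u := fun hu hh => h u hu v hv hh.symm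
        simp; tauto
      have c2 : (T.filter fun u => u ≠ v ∧ ¬ G.Adj v u) ⊆ T.erase v := by
        intro u; simp; tauto
      have k1 : (T.erase v).card < n := hn ▸ Finset.card_erase_lt_of_mem hv
      rw [IP_erase (v := v) (by simp [hv]), e1, e2,
        ih _ k1 (hd.mono_right (Finset.erase_subset _ _))
          (fun a ha b hb => h a ha b (Finset.mem_of_mem_erase hb)) rfl,
        ih _ ((Finset.card_le_card c2).trans_lt k1) (hd.mono_right (Finset.filter_subset _ _))
          (fun a ha b hb => h a ha b (Finset.filter_subset _ _ hb)) rfl,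
        IP_erase hv]
      ring

/-- Attaching an edge `uv` whose end `v` has no neighbour in `S`. -/
lemma IP_pendant {S : Finset V} {u v : V} (hu : u ∉ S) (hv : v ∉ S) (huv : G.Adj u v)
    (hvS : ∀ z ∈ S, ¬ G.Adj v z) (x : ℝ) :
    IP G (insert u (insert v S)) x
      = (1 + x) * IP G S x + x * IP G (S.filter fun z => ¬ G.Adj u z) x := by
  have hne : u ≠ v := huv.ne
  rw [IP_insert (by simp [hne, hu]), IP_insert hv, Finset.filter_insert]
  rw [if_neg (by simpa using huv), Finset.filter_true_of_mem hvS]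
  ring

/-- Adding a vertex without neighbours in `S`. -/
lemma IP_isolated {S : Finset V} {v : V} (hv : v ∉ S) (hvS : ∀ z ∈ S, ¬ G.Adj v z) (x : ℝ) :
    IP G (insert v S) x = (1 + x) * IP G S x := by
  rw [IP_insert hv, Finset.filter_true_of_mem hvS]; ring

end

/-! ### Trees: comparison with paths and stars -/


/-- Rooted trees, built from one-vertex trees by `join A B`: join the root of `B` by an edge to the
root of `A`, which stays the root. -/
inductive RT where
  | pt : RT
  | join : RT → RT → RT

namespace RT

/-- The number of vertices. -/
def sz : RT → ℕ
  | pt => 1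
  | join A B => A.sz + B.sz

/-- For a rooted tree `T` with root `r`, the pair `(I(T - r, -l), I(T - N[r], -l))`. -/
noncomputable def ev : RT → ℝ → ℝ × ℝ
  | pt, _ => (1, 1)
  | join A B, l => ((A.ev l).1 * ((B.ev l).1 - l * (B.ev l).2), (A.ev l).2 * (B.ev l).1)

/-- The independence polynomial at `-l`. -/
noncomputable def val (t : RT) (l : ℝ) : ℝ := (t.ev l).1 - l * (t.ev l).2

/-- All subtrees occurring in the construction of the tree have positive value at `-l`. -/
def Good : RT → ℝ → Prop
  | pt, l => l < 1
  | join A B, l => A.Good l ∧ B.Good l ∧ 0 < (join A B).val l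

lemma sz_pos (t : RT) : 1 ≤ t.sz := by
  induction t with
  | pt => simp [sz]
  | join A B ha hb => simp [sz]; omega

lemma Good.val_pos {t : RT} {l : ℝ} (h : t.Good l) : 0 < t.val l := by
  cases t with
  | pt => simp [Good] at h; simp [val, ev, h]
  | join A B => exact h.2.2

lemma Good.pos {t : RT} {l : ℝ} (h : t.Good l) :
    0 < (t.ev l).1 ∧ 0 < (t.ev l).2 := by
  induction t with
  | pt => simp [ev]
  | join A B ha hb =>
    have h1 := ha h.1
    have h2 := hb h.2.1
    have h3 : 0 < (B.ev l).1 - l * (B.ev l).2 := h.2.1.val_pos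
    exact ⟨mul_pos h1.1 h3, mul_pos h1.2 h2.1⟩

lemma continuous_ev (t : RT) : Continuous (fun l => (t.ev l).1) ∧ Continuous (fun l => (t.ev l).2) := by
  induction t with
  | pt => exact ⟨continuous_const, continuous_const⟩
  | join A B ha hb =>
    exact ⟨ha.1.mul (hb.1.sub (continuous_id.mul hb.2)), ha.2.mul hb.1⟩

lemma continuous_val (t : RT) : Continuous t.val :=
  (continuous_ev t).1.sub (continuous_id.mul (continuous_ev t).2)

lemma val_zero (t : RT) : t.val 0 = 1 := by
  have : (t.ev 0).1 = 1 := by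
    induction t with
    | pt => rfl
    | join A B ha hb => simp [ev, ha, hb]
  simp [val, this]

lemma val_join (A B : RT) (l : ℝ) :
    (join A B).val l = A.val l * B.val l - l ^ 2 * ((A.ev l).2 * (B.ev l).2) := by
  simp only [val, ev]; ring

/-- Positivity of the whole tree on `[-z, 0]` forces positivity of all constituents: at the first
zero of one of the factors, `val_join` would make the value of the whole tree nonpositive. -/
lemma good_of_val_pos (t : RT) {z : ℝ} (hz : 0 ≤ z) (h : ∀ l ∈ Set.Icc 0 z, 0 < t.val l) :
    t.Good z := by
  induction t generalizing z with
  | pt => have := h z ⟨hz, le_rfl⟩; simp [val, ev] at this; simpa [Good] using this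
  | join A B ha hb =>
    have key : ∀ l ∈ Set.Icc 0 z, 0 < min (A.val l) (B.val l) := by
      by_contra! hcon
      obtain ⟨l1, hl1, hl1'⟩ := hcon
      have hc : Continuous fun l => min (A.val l) (B.val l) :=
        A.continuous_val.min B.continuous_val
      have hcomp : IsCompact (Set.Icc 0 z ∩ {l | min (A.val l) (B.val l) ≤ 0}) :=
        isCompact_Icc.inter_right (isClosed_le hc continuous_const)
      obtain ⟨l0, hl0, hmin⟩ := hcomp.exists_isLeast ⟨l1, hl1, hl1'⟩
      have hbefore : ∀ l ∈ Set.Ico 0 l0, 0 < A.val l ∧ 0 < B.val l := by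
        intro l hl
        by_contra hneg
        have : min (A.val l) (B.val l) ≤ 0 := by
          by_contra h'
          push Not at h'
          exact hneg (lt_min_iff.1 h')
        have := hmin ⟨⟨hl.1, hl.2.le.trans hl0.1.2⟩, this⟩
        exact absurd hl.2 (not_lt.2 this)
      have hpos : 0 < l0 := by
        rcases hl0.1.1.lt_or_eq with h' | h'
        · exact h'
        · have := hl0.2
          rw [← h'] at this
          simp [val_zero] at this
          linarith
      have lim : ∀ f : ℝ → ℝ, Continuous f → (∀ l ∈ Set.Ico 0 l0, 0 ≤ f l) → 0 ≤ f l0 := by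
        intro f hf hfl
        have hcl : IsClosed {l | 0 ≤ f l} := isClosed_le continuous_const hf
        have := closure_minimal (show Set.Ico 0 l0 ⊆ {l | 0 ≤ f l} from hfl) hcl
        rw [closure_Ico hpos.ne] at this
        exact this ⟨hpos.le, le_rfl⟩
      have a1 := lim _ A.continuous_val fun l hl => (hbefore l hl).1.le
      have b1 := lim _ B.continuous_val fun l hl => (hbefore l hl).2.le
      have a2 := lim _ A.continuous_ev.2 fun l hl =>
        ((ha hl.1 fun l' hl' => (hbefore l' ⟨hl'.1, hl'.2.trans_lt hl.2⟩).1).pos).2.le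
      have b2 := lim _ B.continuous_ev.2 fun l hl =>
        ((hb hl.1 fun l' hl' => (hbefore l' ⟨hl'.1, hl'.2.trans_lt hl.2⟩).2).pos).2.le
      have hw := h l0 hl0.1
      rw [val_join] at hw
      have h0 : A.val l0 * B.val l0 = 0 := by
        rcases min_le_iff.1 (show min (A.val l0) (B.val l0) ≤ 0 from hl0.2) with h' | h'
        · rw [le_antisymm h' a1, zero_mul]
        · rw [le_antisymm h' b1, mul_zero]
      have : 0 ≤ l0 ^ 2 * ((A.ev l0).2 * (B.ev l0).2) := by positivity
      linarith
    exact ⟨ha hz fun l hl => (lt_min_iff.1 (key l hl)).1,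
      hb hz fun l hl => (lt_min_iff.1 (key l hl)).2, h z ⟨hz, le_rfl⟩⟩

end RT

/-- `W l (k + 1) = I(P_k, -l)`, with the convention `W l 0 = 1` that extends the recursion. -/
noncomputable def W (l : ℝ) : ℕ → ℝ
  | 0 => 1
  | 1 => 1
  | (k + 2) => W l (k + 1) - l * W l k

lemma W_succ (l : ℝ) (k : ℕ) : W l (k + 2) = W l (k + 1) - l * W l k := rfl

lemma W_add (l : ℝ) (a b : ℕ) :
    W l (a + b + 2) = W l (a + 1) * W l (b + 1) - l * W l a * W l b := by
  induction a using Nat.strong_induction_on with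
  | _ a ih =>
    rcases a with _ | _ | a
    · simp [W]
    · have : 0 + 1 + b + 2 = (b + 1) + 2 := by omega
      rw [this, W_succ, W_succ]
      simp [W]; ring
    · have e : a + 1 + 1 + b + 2 = (a + b + 2) + 2 := by omega
      have e2 : a + b + 2 + 1 = (a + 1) + b + 2 := by omega
      rw [e, W_succ, e2, ih (a + 1) (by omega), ih a (by omega)]
      simp only [W_succ]; ring

lemma W_casorati (l : ℝ) (k : ℕ) : W l (k + 1) ^ 2 - W l k * W l (k + 2) = l ^ (k + 1) := by
  induction k with
  | zero => simp [W]
  | succ k ih =>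
    rw [pow_succ l, ← ih]
    simp only [W_succ]; ring

/-- Regarding the path with `a + b + 2` vertices as two shorter paths joined at their ends: if it
has positive value, then so do all shorter paths, and rooting it at an end instead of an inner
vertex does not increase the ratio of the two root polynomials. -/
lemma W_join {l : ℝ} (hl : 0 ≤ l) (a b : ℕ) (ha : ∀ j ≤ a + 2, 0 < W l j)
    (hb : ∀ j ≤ b + 2, 0 < W l j)
    (h : l * (W l a * W l (b + 1)) < W l (a + 1) * W l (b + 2)) :
    (∀ j ≤ a + b + 3, 0 < W l j) ∧
      W l (a + b + 1) * (W l (a + 1) * W l (b + 2)) ≤ W l a * W l (b + 1) * W l (a + b + 2) := by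
  have hpos : ∀ j ≤ a + b + 3, 0 < W l j := by
    induction a with
    | zero =>
      intro j hj
      rcases Nat.lt_or_ge j (b + 3) with h' | h'
      · exact hb j (by omega)
      · obtain rfl : j = b + 1 + 2 := by omega
        rw [W_succ]
        simp [W] at h ⊢
        simpa [W] using h
    | succ a ih =>
      have h' : l * (W l a * W l (b + 1)) < W l (a + 1) * W l (b + 2) := by
        have hc := W_casorati l a
        have p0 := ha a (by omega)
        have p1 := ha (a + 1) (by omega)
        have p2 := ha (a + 2) (by omega)
        have q1 := hb (b + 1) (by omega)
        have q2 := hb (b + 2) (by omega)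
        have hc' : W l a * W l (a + 2) ≤ W l (a + 1) ^ 2 := by
          have := pow_nonneg hl (a + 1); linarith
        have : l * (W l a * W l (b + 1)) * W l (a + 2) < W l (a + 1) * W l (b + 2) * W l (a + 2) := by
          calc l * (W l a * W l (b + 1)) * W l (a + 2)
              = l * W l (b + 1) * (W l a * W l (a + 2)) := by ring
            _ ≤ l * W l (b + 1) * W l (a + 1) ^ 2 := by gcongr
            _ = (l * (W l (a + 1) * W l (b + 1))) * W l (a + 1) := by ring
            _ < (W l (a + 2) * W l (b + 2)) * W l (a + 1) := by gcongr
            _ = _ := by ring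
        exact lt_of_mul_lt_mul_right this p2.le
      have := ih (fun j hj => ha j (by omega)) h'
      intro j hj
      rcases Nat.lt_or_ge j (a + b + 4) with h'' | h''
      · exact this j (by omega)
      · obtain rfl : j = (a + 1) + (b + 1) + 2 := by omega
        rw [W_add]
        have e : b + 1 + 1 = b + 2 := rfl
        rw [e]
        linarith
  refine ⟨hpos, ?_⟩
  rcases a with _ | a
  · simp [W]
  · have e1 : a + 1 + b + 1 = a + b + 2 := by omega
    have e2 : a + 1 + b + 2 = a + (b + 1) + 2 := by omega
    rw [e1, e2, W_add, W_add]
    have d1 := ha a (by omega)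
    have d2 := hb b (by omega)
    have : 0 ≤ l * (W l a * W l b) *
        (W l (a + 1 + 1) * W l (b + 2) - l * (W l (a + 1) * W l (b + 1))) := by
      have : 0 ≤ l * (W l a * W l b) := by positivity
      exact mul_nonneg this (by linarith)
    have e3 : a + 1 + 1 = a + 2 := rfl
    simp only [e3] at this ⊢
    simp only [W_succ] at this ⊢
    nlinarith [this]

namespace RT

/-- Among rooted trees of a given order, the path rooted at an end has the smallest ratio of the
two root polynomials; in particular, it has positive value whenever some other tree has. -/
lemma Good.path_le {t : RT} {l : ℝ} (hl : 0 ≤ l) (h : t.Good l) :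
    (∀ j ≤ t.sz + 1, 0 < W l j) ∧ W l (t.sz - 1) * (t.ev l).1 ≤ W l t.sz * (t.ev l).2 := by
  induction t with
  | pt =>
    simp [Good] at h
    refine ⟨?_, by simp [sz, W, ev]⟩
    intro j hj
    simp [sz] at hj
    interval_cases j <;> simp [W, h]
  | join A B iha ihb =>
    obtain ⟨pa, ra⟩ := iha h.1
    obtain ⟨pb, rb⟩ := ihb h.2.1
    obtain ⟨a, ea⟩ : ∃ a, A.sz = a + 1 := ⟨A.sz - 1, by have := A.sz_pos; omega⟩
    obtain ⟨b, eb⟩ : ∃ b, B.sz = b + 1 := ⟨B.sz - 1, by have := B.sz_pos; omega⟩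
    simp only [ea, eb, Nat.add_sub_cancel] at pa ra pb rb
    have ez : (join A B).sz = a + b + 2 := by simp [sz, ea, eb]; omega
    obtain ⟨qa1, qa2⟩ := h.1.pos
    obtain ⟨qb1, qb2⟩ := h.2.1.pos
    obtain ⟨qt1, qt2⟩ := h.pos
    have hv := h.val_pos
    have hB : 0 < B.val l := h.2.1.val_pos
    have w0 := pa a (by omega)
    have w1 := pa (a + 1) (by omega)
    have v0 := pb b (by omega)
    have v1 := pb (b + 1) (by omega)
    have v2 := pb (b + 2) (by omega)
    have step : W l (b + 1) * B.val l ≤ W l (b + 2) * (B.ev l).1 := by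
      rw [W_succ, val]; nlinarith
    have comb : W l a * W l (b + 1) * ((join A B).ev l).1
        ≤ W l (a + 1) * W l (b + 2) * ((join A B).ev l).2 := by
      calc W l a * W l (b + 1) * ((join A B).ev l).1
          = (W l a * (A.ev l).1) * (W l (b + 1) * B.val l) := by simp only [ev, val]; ring
        _ ≤ (W l (a + 1) * (A.ev l).2) * (W l (b + 2) * (B.ev l).1) := by gcongr
        _ = _ := by simp only [ev]; ring
    have hlt : l * (W l a * W l (b + 1)) < W l (a + 1) * W l (b + 2) := by
      have h1 : l * ((join A B).ev l).2 < ((join A B).ev l).1 := by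
        simp only [val] at hv; linarith
      have : l * (W l a * W l (b + 1)) * ((join A B).ev l).1
          < W l (a + 1) * W l (b + 2) * ((join A B).ev l).1 := by
        calc l * (W l a * W l (b + 1)) * ((join A B).ev l).1
            = l * (W l a * W l (b + 1) * ((join A B).ev l).1) := by ring
          _ ≤ l * (W l (a + 1) * W l (b + 2) * ((join A B).ev l).2) := by gcongr
          _ = W l (a + 1) * W l (b + 2) * (l * ((join A B).ev l).2) := by ring
          _ < _ := by gcongr
      exact lt_of_mul_lt_mul_right this qt1.le
    obtain ⟨hp, hr⟩ := W_join hl a b pa pb hlt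
    rw [ez]
    refine ⟨hp, ?_⟩
    have e : a + b + 2 - 1 = a + b + 1 := by omega
    rw [e]
    have z0 := hp (a + b + 1) (by omega)
    have z1 := hp (a + b + 2) (by omega)
    have m : 0 < W l (a + 1) * W l (b + 2) := by positivity
    refine le_of_mul_le_mul_left ?_ m
    calc W l (a + 1) * W l (b + 2) * (W l (a + b + 1) * ((join A B).ev l).1)
        = (W l (a + b + 1) * (W l (a + 1) * W l (b + 2))) * ((join A B).ev l).1 := by ring
      _ ≤ (W l a * W l (b + 1) * W l (a + b + 2)) * ((join A B).ev l).1 := by gcongr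
      _ = W l (a + b + 2) * (W l a * W l (b + 1) * ((join A B).ev l).1) := by ring
      _ ≤ W l (a + b + 2) * (W l (a + 1) * W l (b + 2) * ((join A B).ev l).2) := by gcongr
      _ = _ := by ring

/-- Among rooted trees of a given order, the star rooted at its centre has the largest ratio of the
two root polynomials, as long as the star has positive value. -/
lemma good_of_star (t : RT) {l : ℝ} (hl : 0 ≤ l) (hl1 : l < 1) (h : l < (1 - l) ^ (t.sz - 1)) :
    t.Good l ∧ (1 - l) ^ (t.sz - 1) * (t.ev l).2 ≤ (t.ev l).1 := by
  induction t with
  | pt => simp [Good, sz, ev, hl1]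
  | join A B iha ihb =>
    obtain ⟨a, ea⟩ : ∃ a, A.sz = a + 1 := ⟨A.sz - 1, by have := A.sz_pos; omega⟩
    obtain ⟨b, eb⟩ : ∃ b, B.sz = b + 1 := ⟨B.sz - 1, by have := B.sz_pos; omega⟩
    have ez : (join A B).sz - 1 = a + b + 1 := by simp [sz, ea, eb]; omega
    rw [ez] at h ⊢
    simp only [ea, eb, Nat.add_sub_cancel] at iha ihb
    have s0 : 0 < 1 - l := by linarith
    have s1 : 1 - l ≤ 1 := by linarith
    have mono : ∀ k ≤ a + b + 1, l < (1 - l) ^ k := fun k hk =>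
      h.trans_le (pow_le_pow_of_le_one s0.le s1 hk)
    obtain ⟨ga, ra⟩ := iha (mono a (by omega))
    obtain ⟨gb, rb⟩ := ihb (mono b (by omega))
    obtain ⟨qa1, qa2⟩ := ga.pos
    obtain ⟨qb1, qb2⟩ := gb.pos
    have hu : l < (1 - l) ^ (b + 1) := mono _ (by omega)
    have hu' : (1 - l) ^ (b + 1) ≤ 1 - l := pow_le_of_le_one s0.le s1 (by omega)
    have sb : 0 < (1 - l) ^ b := by positivity
    -- With `u = (1 - l) ^ (b + 1)`, this is `u * (1 - u) ≥ l * (1 - l)` for `l ≤ u ≤ 1 - l`.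
    have num : (1 - l) ^ (b + 1) * (1 - l) ^ b + l ≤ (1 - l) ^ b := by
      have k : 0 ≤ ((1 - l) - (1 - l) ^ (b + 1)) * ((1 - l) ^ (b + 1) - l) :=
        mul_nonneg (by linarith) (by linarith)
      have e : (1 - l) ^ (b + 1) = (1 - l) ^ b * (1 - l) := pow_succ _ _
      have : 0 ≤ (1 - l) * ((1 - l) ^ b - (1 - l) ^ (b + 1) * (1 - l) ^ b - l) := by
        rw [e] at k ⊢; nlinarith
      have := nonneg_of_mul_nonneg_right this s0
      linarith
    have hB : (1 - l) ^ (b + 1) * (B.ev l).1 ≤ (B.ev l).1 - l * (B.ev l).2 := by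
      refine le_of_mul_le_mul_left ?_ sb
      have t1 : l * ((1 - l) ^ b * (B.ev l).2) ≤ l * (B.ev l).1 := by gcongr
      have t2 := mul_le_mul_of_nonneg_right num qb1.le
      nlinarith
    have main : (1 - l) ^ (a + b + 1) * ((join A B).ev l).2 ≤ ((join A B).ev l).1 := by
      simp only [ev]
      calc (1 - l) ^ (a + b + 1) * ((A.ev l).2 * (B.ev l).1)
          = ((1 - l) ^ a * (A.ev l).2) * ((1 - l) ^ (b + 1) * (B.ev l).1) := by
            rw [add_assoc, pow_add]; ring
        _ ≤ _ := by gcongr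
    refine ⟨⟨ga, gb, ?_⟩, main⟩
    have q2 : 0 < ((join A B).ev l).2 := mul_pos qa2 qb1
    have := mul_lt_mul_of_pos_right h q2
    simp only [val]; linarith

/-- The path with `n + 1` vertices, rooted at an end. -/
def path : ℕ → RT
  | 0 => pt
  | n + 1 => join pt (path n)

/-- The star with `n` leaves, rooted at its centre. -/
def star : ℕ → RT
  | 0 => pt
  | n + 1 => join (star n) pt

lemma sz_path (n : ℕ) : (path n).sz = n + 1 := by
  induction n with
  | zero => rfl
  | succ n ih => simp [path, sz, ih]; omega

lemma sz_star (n : ℕ) : (star n).sz = n + 1 := by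
  induction n with
  | zero => rfl
  | succ n ih => simp [star, sz, ih]

lemma ev_path (n : ℕ) (l : ℝ) : (path n).ev l = (W l (n + 1), W l n) := by
  induction n with
  | zero => simp [path, ev, W]
  | succ n ih => simp [path, ev, ih, W_succ]

lemma val_path (n : ℕ) (l : ℝ) : (path n).val l = W l (n + 2) := by
  simp [val, ev_path, W_succ]

lemma ev_star (n : ℕ) (l : ℝ) : (star n).ev l = ((1 - l) ^ n, 1) := by
  induction n with
  | zero => simp [star, ev]
  | succ n ih => simp [star, ev, ih, pow_succ]

end RT

/-! ### Graphs represented by trees -/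


section
open Classical
set_option linter.unusedSectionVars false
variable {V : Type*} [DecidableEq V] {G : SimpleGraph V}

/-- Vertex sets inducing a tree in `G`, built up by adding one leaf at a time. -/
inductive TreeSet (G : SimpleGraph V) : Finset V → Prop
  | single (v : V) : TreeSet G {v}
  | leaf {U : Finset V} {u w : V} : TreeSet G U → u ∉ U → w ∈ U →
      (∀ z ∈ U, G.Adj u z ↔ z = w) → TreeSet G (insert u U)

/-- A tree with a chosen vertex `r` and at least one more vertex splits along an edge at `r`. -/
lemma TreeSet.split {U : Finset V} (h : TreeSet G U) {r : V} (hr : r ∈ U) :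
    U = {r} ∨ ∃ A B r', TreeSet G A ∧ TreeSet G B ∧ Disjoint A B ∧ A ∪ B = U ∧ r ∈ A ∧ r' ∈ B ∧
      ∀ a ∈ A, ∀ b ∈ B, G.Adj a b ↔ a = r ∧ b = r' := by
  induction h generalizing r with
  | single v => left; simp at hr; rw [hr]
  | @leaf U u w hU huU hwU hadj ih =>
    right
    by_cases hru : r = u
    · subst hru
      refine ⟨{r}, U, w, .single r, hU, by simpa using huU, by ext; simp, by simp, hwU, ?_⟩
      intro a ha b hb
      simp at ha
      subst ha
      simpa using hadj b hb
    · have hrU : r ∈ U := by simpa [hru] using hr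
      rcases ih hrU with rfl | ⟨A, B, r', hA, hB, hd, rfl, hrA, hrB, hAB⟩
      · simp at hwU
        subst hwU
        refine ⟨{w}, {u}, u, .single w, .single u, by simpa using hru, by ext; simp; tauto,
          by simp, by simp, ?_⟩
        intro a ha b hb
        simp at ha hb
        subst ha hb
        simpa [G.adj_comm] using hadj a (by simp)
      · have hAB' : ∀ z, z ∈ A ∪ B → (G.Adj z u ↔ z = w) := fun z hz => by
          rw [G.adj_comm]; exact hadj z hz
        rcases Finset.mem_union.1 hwU with hw | hw
        · refine ⟨insert u A, B, r', .leaf hA (fun h => huU (by simp [h])) hw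
            (fun z hz => hadj z (by simp [hz])), hB, ?_, by ext; simp, by simp [hrA], hrB, ?_⟩
          · rw [Finset.disjoint_insert_left]; exact ⟨fun h => huU (by simp [h]), hd⟩
          · intro a ha b hb
            rcases Finset.mem_insert.1 ha with rfl | ha
            · rw [hadj b (by simp [hb])]
              constructor
              · rintro rfl; exact absurd hb (Finset.disjoint_left.1 hd hw)
              · rintro ⟨rfl, -⟩; exact absurd rfl hru
            · exact hAB a ha b hb
        · refine ⟨A, insert u B, r', hA, .leaf hB (fun h => huU (by simp [h])) hw
            (fun z hz => hadj z (by simp [hz])), ?_, by ext; simp, hrA, by simp [hrB], ?_⟩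
          · rw [Finset.disjoint_insert_right]; exact ⟨fun h => huU (by simp [h]), hd⟩
          · intro a ha b hb
            rcases Finset.mem_insert.1 hb with rfl | hb
            · rw [hAB' a (by simp [ha])]
              constructor
              · rintro rfl; exact absurd hw (Finset.disjoint_left.1 hd ha)
              · rintro ⟨-, rfl⟩; exact absurd (Finset.mem_union_right _ hrB) huU
            · exact hAB a ha b hb

lemma TreeSet.exists_RT {U : Finset V} (h : TreeSet G U) {r : V} (hr : r ∈ U) :
    ∃ t : RT, t.sz = U.card ∧ ∀ y, IP G (U.erase r) y = (t.ev (-y)).1 ∧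
      IP G (U.filter fun u => u ≠ r ∧ ¬ G.Adj r u) y = (t.ev (-y)).2 := by
  induction hn : U.card using Nat.strong_induction_on generalizing U r with
  | _ n ih =>
    rcases h.split hr with rfl | ⟨A, B, r', hA, hB, hd, rfl, hrA, hrB, hAB⟩
    · refine ⟨.pt, by simpa [RT.sz] using hn, fun y => ?_⟩
      have : (({r} : Finset V).filter fun u => u ≠ r ∧ ¬ G.Adj r u) = ∅ := by ext; simp; tauto
      rw [this]
      simp [IP_empty, RT.ev]
    · have hcard := Finset.card_union_of_disjoint hd
      have cA : 0 < A.card := Finset.card_pos.2 ⟨r, hrA⟩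
      have cB : 0 < B.card := Finset.card_pos.2 ⟨r', hrB⟩
      obtain ⟨tA, sA, eA⟩ := ih A.card (by omega) hA hrA rfl
      obtain ⟨tB, sB, eB⟩ := ih B.card (by omega) hB hrB rfl
      refine ⟨.join tA tB, by simp [RT.sz, sA, sB]; omega, fun y => ?_⟩
      have hrB' : r ∉ B := Finset.disjoint_left.1 hd hrA
      have e1 : (A ∪ B).erase r = A.erase r ∪ B := by
        ext u
        have : u = r → u ∉ B := fun e => e ▸ hrB'
        simp; tauto
      have e2 : ((A ∪ B).filter fun u => u ≠ r ∧ ¬ G.Adj r u)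
          = (A.filter fun u => u ≠ r ∧ ¬ G.Adj r u) ∪ B.erase r' := by
        ext u
        have h1 : u = r → u ∉ B := fun e => e ▸ hrB'
        have h2 : u ∈ B → (G.Adj r u ↔ u = r') := fun hu => by simpa using hAB r hrA u hu
        simp; tauto
      have vB : IP G B y = tB.val (-y) := by
        rw [IP_erase hrB, (eB y).1, (eB y).2, RT.val]; ring
      rw [e1, e2, IP_union, IP_union, (eA y).1, (eA y).2, (eB y).1, vB]
      · exact ⟨rfl, rfl⟩
      · exact Finset.disjoint_of_subset_left (Finset.filter_subset _ _)
          (hd.mono_right (Finset.erase_subset _ _))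
      · intro a ha b hb hab
        have := (hAB a (Finset.filter_subset _ _ ha) b (Finset.mem_of_mem_erase hb)).1 hab
        exact (Finset.ne_of_mem_erase hb) this.2
      · exact hd.mono_left (Finset.erase_subset _ _)
      · intro a ha b hb hab
        have := (hAB a (Finset.mem_of_mem_erase ha) b hb).1 hab
        exact (Finset.ne_of_mem_erase ha) this.1

lemma TreeSet.nonempty {U : Finset V} (h : TreeSet G U) : U.Nonempty := by
  cases h <;> simp

lemma TreeSet.exists_RT_val {U : Finset V} (h : TreeSet G U) :
    ∃ t : RT, t.sz = U.card ∧ ∀ y, IP G U y = t.val (-y) := by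
  obtain ⟨r, hr⟩ := h.nonempty
  obtain ⟨t, ht, e⟩ := h.exists_RT hr
  refine ⟨t, ht, fun y => ?_⟩
  rw [IP_erase hr, (e y).1, (e y).2, RT.val]; ring

/-- The independence polynomial of `G[S]` is that of the tree `G[U]` after the substitution
`x ↦ x / (1 + x)`, up to a power of `1 + x`; the same holds after deleting any set of vertices of
`U'`, the vertices at which further pendant paths may be attached. -/
def TreeRep (G : SimpleGraph V) (S U U' : Finset V) : Prop :=
  U' ⊆ U ∧ U ⊆ S ∧ TreeSet G U ∧ ∀ x : ℝ, -1 < x → ∀ D ⊆ U',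
    IP G (S \ D) x = (1 + x) ^ (U.card - 1) * IP G (U \ D) (x / (1 + x))

/-- Attaching a path `v - u` of order two at `w ∈ U'` adds the leaf `u` to the tree. -/
lemma TreeRep.step {S U U' : Finset V} (h : TreeRep G S U U') {u v w : V} (hu : u ∉ S) (hv : v ∉ S)
    (huv : G.Adj u v) (hw : w ∈ U') (huS : ∀ z ∈ S, G.Adj u z ↔ z = w)
    (hvS : ∀ z ∈ S, ¬ G.Adj v z) :
    TreeRep G (insert u (insert v S)) (insert u U) (insert u U') := by
  obtain ⟨h1, h2, h3, h4⟩ := h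
  have huU : u ∉ U := fun h => hu (h2 h)
  have hne : u ≠ v := huv.ne
  have hcard : U.card = (U.card - 1) + 1 := by
    have := Finset.card_pos.2 ⟨w, h1 hw⟩; omega
  refine ⟨Finset.insert_subset_insert _ h1, Finset.insert_subset_insert _ (h2.trans
    (Finset.subset_insert _ _)), h3.leaf huU (h1 hw) (fun z hz => huS z (h2 hz)), ?_⟩
  intro x hx D hD
  have hx0 : (1 + x) ≠ 0 := by linarith
  rw [Finset.card_insert_of_notMem huU, Nat.add_sub_cancel]
  have hvD : v ∉ D := fun h => by
    rcases Finset.mem_insert.1 (hD h) with h | h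
    · exact hne h.symm
    · exact hv (h2 (h1 h))
  by_cases huD : u ∈ D
  · have hD' : D.erase u ⊆ U' := by
      intro z hz
      have := hD (Finset.mem_of_mem_erase hz)
      exact (Finset.mem_insert.1 this).resolve_left (Finset.ne_of_mem_erase hz)
    have e1 : insert u (insert v S) \ D = insert v (S \ D.erase u) := by
      ext z
      have t1 : z = u → z ∈ D := fun e => e ▸ huD
      have t2 : z = v → z ∉ D := fun e => e ▸ hvD
      have t3 : z = u → z ∉ S := fun e => e ▸ hu
      have t4 : z = u → z ≠ v := fun e => e ▸ hne
      simp; tauto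
    have e2 : insert u U \ D = U \ D.erase u := by
      ext z
      have t1 : z = u → z ∈ D := fun e => e ▸ huD
      have t3 : z = u → z ∉ U := fun e => e ▸ huU
      simp; tauto
    rw [e1, e2, IP_isolated (by simp [hv]) (fun z hz => hvS z (Finset.sdiff_subset hz)),
      h4 x hx _ hD', hcard, pow_succ]
    simp only [Nat.add_sub_cancel]
    ring
  · have hD' : D ⊆ U' := fun z hz =>
      (Finset.mem_insert.1 (hD hz)).resolve_left fun e => huD (e ▸ hz)
    have e1 : insert u (insert v S) \ D = insert u (insert v (S \ D)) := by
      ext z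
      have t1 : z = u → z ∉ D := fun e => e ▸ huD
      have t2 : z = v → z ∉ D := fun e => e ▸ hvD
      simp; tauto
    have e2 : insert u U \ D = insert u (U \ D) := by
      ext z
      have t1 : z = u → z ∉ D := fun e => e ▸ huD
      simp; tauto
    have e3 : ((S \ D).filter fun z => ¬ G.Adj u z) = S \ insert w D := by
      ext z
      have t1 := huS z
      simp; tauto
    have e4 : ((U \ D).filter fun z => ¬ G.Adj u z) = U \ insert w D := by
      ext z
      have t1 := huS z
      have t2 := @h2 z
      simp; tauto
    rw [e1, e2, IP_pendant (by simp [hu]) (by simp [hv]) huv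
      (fun z hz => hvS z (Finset.sdiff_subset hz)), IP_insert (by simp [huU]), e3, e4,
      h4 x hx _ hD', h4 x hx _ (Finset.insert_subset hw hD')]
    conv_rhs => rw [hcard, pow_succ]
    have hy : (1 + x) * (x / (1 + x)) = x := mul_div_cancel₀ x hx0
    linear_combination (-(1 + x) ^ (U.card - 1) * IP G (U \ insert w D) (x / (1 + x))) * hy

end

/-! ### Well-covered unicyclic graphs without a removable pendant pair -/


section
open Classical
set_option linter.unusedSectionVars false
variable {V : Type*} [DecidableEq V] {G : SimpleGraph V}

/-- `s` is a maximal independent set of the induced subgraph `G[S]`. -/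
def MaxIndep (G : SimpleGraph V) (S s : Finset V) : Prop :=
  s ⊆ S ∧ IsIndepFinset G s ∧ ∀ v ∈ S, v ∉ s → ∃ u ∈ s, G.Adj v u

/-- The induced subgraph `G[S]` is well-covered. -/
def WC (G : SimpleGraph V) (S : Finset V) : Prop :=
  ∀ s t, MaxIndep G S s → MaxIndep G S t → s.card = t.card

/-- The neighbours of `v` in `S`. -/
noncomputable def nb (G : SimpleGraph V) (S : Finset V) (v : V) : Finset V := S.filter (G.Adj v)

lemma mem_nb {S : Finset V} {v u : V} : u ∈ nb G S v ↔ u ∈ S ∧ G.Adj v u := by simp [nb]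

lemma exists_maxIndep {S s : Finset V} (hs : s ⊆ S) (hi : IsIndepFinset G s) :
    ∃ M, s ⊆ M ∧ MaxIndep G S M := by
  obtain ⟨M, hM, hmax⟩ := Finset.exists_max_image
    (S.powerset.filter fun t => s ⊆ t ∧ IsIndepFinset G t) Finset.card
    ⟨s, by simp [hs, hi]⟩
  simp only [Finset.mem_filter, Finset.mem_powerset] at hM hmax
  refine ⟨M, hM.2.1, hM.1, hM.2.2, fun v hv hvM => ?_⟩
  by_contra! hcon
  have := hmax (insert v M) ⟨Finset.insert_subset hv hM.1,
    hM.2.1.trans (Finset.subset_insert _ _), isIndep_insert.2 ⟨hM.2.2, hcon⟩⟩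
  rw [Finset.card_insert_of_notMem hvM] at this
  omega

lemma WC.card_le {S M t : Finset V} (h : WC G S) (hM : MaxIndep G S M) (ht : t ⊆ S)
    (hi : IsIndepFinset G t) : t.card ≤ M.card := by
  obtain ⟨M', h1, h2⟩ := exists_maxIndep ht hi
  exact (Finset.card_le_card h1).trans (h M' M h2 hM).le

/-- In a well-covered graph, a part `R` of an independent set `X` cannot be exchanged for a larger
set `N` in all maximal independent sets containing `X`. -/
lemma WC.exchange {S : Finset V} (h : WC G S) (X R N : Finset V) (hX : X ⊆ S)
    (hXi : IsIndepFinset G X) (hR : R ⊆ X) (hN : N ⊆ S) (hNi : IsIndepFinset G N)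
    (hcard : R.card < N.card) (h1 : ∀ n ∈ N, ∃ x ∈ X, G.Adj n x)
    (h2 : ∀ n ∈ N, ∀ z ∈ S, G.Adj n z → z ∈ R ∨ ∃ x ∈ X, G.Adj z x) : False := by
  obtain ⟨M, hXM, hM⟩ := exists_maxIndep hX hXi
  have hd : Disjoint (M \ R) N := by
    rw [Finset.disjoint_right]
    intro n hn hnM
    obtain ⟨x, hx, hnx⟩ := h1 n hn
    exact hM.2.1 n (Finset.sdiff_subset hnM) x (hXM hx) hnx
  have cross : ∀ m ∈ M \ R, ∀ n ∈ N, ¬ G.Adj n m := by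
    intro m hm n hn hnm
    rw [Finset.mem_sdiff] at hm
    rcases h2 n hn m (hM.1 hm.1) hnm with h' | ⟨x, hx, hmx⟩
    · exact hm.2 h'
    · exact hM.2.1 m hm.1 x (hXM hx) hmx
  have hi : IsIndepFinset G (M \ R ∪ N) := by
    intro a ha b hb hab
    rcases Finset.mem_union.1 ha with ha | ha <;> rcases Finset.mem_union.1 hb with hb | hb
    · exact hM.2.1 a (Finset.sdiff_subset ha) b (Finset.sdiff_subset hb) hab
    · exact cross a ha b hb hab.symm
    · exact cross b hb a ha hab
    · exact hNi a ha b hb hab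
  have hle := h.card_le hM (Finset.union_subset (Finset.sdiff_subset.trans hM.1) hN) hi
  rw [Finset.card_union_of_disjoint hd, Finset.card_sdiff_of_subset (hR.trans hXM)] at hle
  have := Finset.card_le_card (hR.trans hXM)
  omega

lemma isIndep_pair {a b : V} (h : ¬ G.Adj a b) : IsIndepFinset G {a, b} := by
  intro u hu v hv
  simp only [Finset.mem_insert, Finset.mem_singleton] at hu hv
  rcases hu with rfl | rfl <;> rcases hv with rfl | rfl <;>
    simp_all [G.adj_comm]

lemma isIndep_triple {a b c : V} (h : ¬ G.Adj a b) (h' : ¬ G.Adj a c) (h'' : ¬ G.Adj b c) :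
    IsIndepFinset G {a, b, c} := by
  rw [isIndep_insert]
  exact ⟨isIndep_pair h'', by simp [h, h']⟩

/-- The invariants of a connected well-covered unicyclic graph of odd order, for the induced
subgraph `G[S]`. Connectedness says that no proper nonempty subset of `S` is closed under adjacency;
having as many edges as vertices is expressed through the sum of the degrees. -/
structure OddInv (G : SimpleGraph V) (S : Finset V) : Prop where
  odd : Odd S.card
  conn : ∀ X ⊆ S, X.Nonempty → (∀ a ∈ X, ∀ b ∈ S, G.Adj a b → b ∈ X) → X = S
  deg : ∑ v ∈ S, (nb G S v).card = 2 * S.card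
  wc : WC G S

/-- In a well-covered graph no vertex has two leaf neighbours. -/
lemma WC.leaf_unique {S : Finset V} (h : WC G S) {u v v' : V} (hu : u ∈ S) (hv : nb G S v = {u})
    (hv' : nb G S v' = {u}) (hvS : v ∈ S) (hvS' : v' ∈ S) : v = v' := by
  by_contra hne
  have a1 : ∀ z ∈ S, G.Adj v z → z = u := fun z hz hvz => by
    have : z ∈ nb G S v := mem_nb.2 ⟨hz, hvz⟩
    simpa [hv] using this
  have a2 : ∀ z ∈ S, G.Adj v' z → z = u := fun z hz hvz => by
    have : z ∈ nb G S v' := mem_nb.2 ⟨hz, hvz⟩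
    simpa [hv'] using this
  have b1 : G.Adj v u := (mem_nb.1 (by rw [hv]; simp : u ∈ nb G S v)).2
  have b2 : G.Adj v' u := (mem_nb.1 (by rw [hv']; simp : u ∈ nb G S v')).2
  refine h.exchange {u} {u} {v, v'} (by simpa using hu) (by simp [IsIndepFinset]) le_rfl
    (by simp [Finset.insert_subset_iff, hvS, hvS']) (isIndep_pair ?_) ?_ ?_ ?_
  · intro hh
    exact G.loopless.irrefl _ (a1 v' hvS' hh ▸ b2)
  · rw [Finset.card_pair hne]; simp
  · simp [b1, b2]
  · intro n hn z hz hnz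
    left
    simp only [Finset.mem_insert, Finset.mem_singleton] at hn ⊢
    rcases hn with rfl | rfl
    · exact a1 z hz hnz
    · exact a2 z hz hnz

lemma OddInv.deg_pos {S : Finset V} (h : OddInv G S) {v : V} (hv : v ∈ S) :
    1 ≤ (nb G S v).card := by
  by_contra hcon
  have h0 : nb G S v = ∅ := by rw [← Finset.card_eq_zero]; omega
  have hS := h.conn {v} (by simpa using hv) (by simp) (by
    intro a ha b hb hab
    simp at ha
    subst ha
    have : b ∈ nb G S a := mem_nb.2 ⟨hb, hab⟩
    simp [h0] at this)
  have := h.deg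
  rw [← hS] at this h0
  simp [h0] at this

/-- The other neighbour of a vertex of degree two. -/
lemma exists_other {S : Finset V} {a b : V} (h : (nb G S b).card = 2) (ha : a ∈ S)
    (hba : G.Adj b a) :
    ∃ c ∈ S, G.Adj b c ∧ c ≠ a ∧ ∀ z ∈ S, G.Adj b z → z = a ∨ z = c := by
  obtain ⟨p, q, hpq, e⟩ := Finset.card_eq_two.1 h
  have hp : p ∈ nb G S b := by rw [e]; simp
  have hq : q ∈ nb G S b := by rw [e]; simp
  have hz : ∀ z ∈ S, G.Adj b z → z = p ∨ z = q := fun z hz hbz => by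
    have : z ∈ nb G S b := mem_nb.2 ⟨hz, hbz⟩
    simpa [e] using this
  rw [mem_nb] at hp hq
  rcases hz a ha hba with rfl | rfl
  · exact ⟨q, hq.1, hq.2, hpq.symm, hz⟩
  · exact ⟨p, hp.1, hp.2, hpq, fun z h1 h2 => (hz z h1 h2).symm⟩

set_option maxHeartbeats 1000000 in
/-- A graph with the invariants `OddInv` and without a pendant path of order two is `2`-regular.
Comparing degree sums, the neighbours of leaves have degree three, and all other nonleaves have
degree two; an edge between a vertex `a` with a leaf and a vertex `b` of degree two contradicts
well-coveredness by an exchange, or else lies on a `4`-cycle, where the order is even. -/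
lemma OddInv.regular {S : Finset V} (h : OddInv G S)
    (hno : ∀ u ∈ S, ∀ v ∈ S, ∀ w ∈ S, v ≠ w → nb G S v = {u} → nb G S u = {v, w} → False) :
    ∀ v ∈ S, (nb G S v).card = 2 := by
  set L := S.filter fun v => (nb G S v).card = 1 with hL
  set A := S.filter fun u => ∃ v ∈ S, nb G S v = {u} with hA
  set B := S \ (L ∪ A) with hB
  have adj_of : ∀ {v u : V}, nb G S v = {u} → G.Adj v u := fun {v u} e =>
    (mem_nb.1 (by rw [e]; simp : u ∈ nb G S v)).2
  have degA : ∀ a ∈ A, 3 ≤ (nb G S a).card := by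
    intro a ha
    obtain ⟨haS, v, hv, hva⟩ := Finset.mem_filter.1 ha
    have hav := (adj_of hva).symm
    have h1 := h.deg_pos haS
    have hvn : v ∈ nb G S a := mem_nb.2 ⟨hv, hav⟩
    by_contra hlt
    have : (nb G S a).card = 1 ∨ (nb G S a).card = 2 := by omega
    rcases this with h' | h'
    · obtain ⟨v', hv'⟩ := Finset.card_eq_one.1 h'
      rw [hv', Finset.mem_singleton] at hvn
      subst hvn
      have hS := h.conn {a, v} (by simp [Finset.insert_subset_iff, haS, hv]) (by simp) (by
        intro x hx b hb hxb
        simp only [Finset.mem_insert, Finset.mem_singleton] at hx ⊢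
        rcases hx with rfl | rfl
        · right
          have : b ∈ nb G S x := mem_nb.2 ⟨hb, hxb⟩
          simpa [hv'] using this
        · left
          have : b ∈ nb G S x := mem_nb.2 ⟨hb, hxb⟩
          simpa [hva] using this)
      have ho := h.odd
      rw [← hS, Finset.card_pair hav.ne] at ho
      exact absurd ho (by decide)
    · obtain ⟨p, q, hpq, e⟩ := Finset.card_eq_two.1 h'
      have hpS : p ∈ S := (mem_nb.1 (by rw [e]; simp : p ∈ nb G S a)).1
      have hqS : q ∈ S := (mem_nb.1 (by rw [e]; simp : q ∈ nb G S a)).1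
      rw [e] at hvn
      simp only [Finset.mem_insert, Finset.mem_singleton] at hvn
      rcases hvn with rfl | rfl
      · exact hno a haS v hv q hqS hpq hva e
      · exact hno a haS v hv p hpS hpq.symm hva (by rw [e, Finset.pair_comm])
  have dLA : Disjoint L A := by
    rw [Finset.disjoint_left]
    intro v hvL hvA
    have := degA v hvA
    have := (Finset.mem_filter.1 hvL).2
    omega
  have hLAS : L ∪ A ⊆ S := Finset.union_subset (Finset.filter_subset _ _) (Finset.filter_subset _ _)
  have degB : ∀ b ∈ B, 2 ≤ (nb G S b).card := by
    intro b hb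
    obtain ⟨hbS, hbn⟩ := Finset.mem_sdiff.1 hb
    have := h.deg_pos hbS
    have : (nb G S b).card ≠ 1 := fun e => hbn (by simp [hL, hbS, e])
    omega
  have cLA : L.card ≤ A.card := by
    have hf : ∀ v ∈ L, ∃ u ∈ A, nb G S v = {u} := by
      intro v hv
      obtain ⟨hvS, hv1⟩ := Finset.mem_filter.1 hv
      obtain ⟨u, hu⟩ := Finset.card_eq_one.1 hv1
      have huS : u ∈ S := (mem_nb.1 (by rw [hu]; simp : u ∈ nb G S v)).1
      exact ⟨u, Finset.mem_filter.2 ⟨huS, v, hvS, hu⟩, hu⟩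
    choose! f hf1 hf2 using hf
    refine Finset.card_le_card_of_injOn f hf1 ?_
    intro v hv v' hv' e
    have := hf2 v' hv'
    rw [← e] at this
    exact h.wc.leaf_unique (Finset.filter_subset _ _ (hf1 v hv)) (hf2 v hv) this
      (Finset.filter_subset _ _ hv) (Finset.filter_subset _ _ hv')
  have cS : S.card = L.card + A.card + B.card := by
    rw [hB, Finset.card_sdiff_of_subset hLAS, ← Finset.card_union_of_disjoint dLA]
    have := Finset.card_le_card hLAS
    omega
  have sS : ∑ v ∈ S, (nb G S v).card
      = L.card + ∑ v ∈ A, (nb G S v).card + ∑ v ∈ B, (nb G S v).card := by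
    rw [← Finset.sum_sdiff hLAS, ← hB, Finset.sum_union dLA,
      Finset.sum_congr rfl (fun v hv => (Finset.mem_filter.1 hv).2 : ∀ v ∈ L, (nb G S v).card = 1)]
    simp; ring
  have hdeg := h.deg
  have gA : A.card * 3 ≤ ∑ v ∈ A, (nb G S v).card := Finset.card_nsmul_le_sum A _ 3 degA
  have gB : B.card * 2 ≤ ∑ v ∈ B, (nb G S v).card := Finset.card_nsmul_le_sum B _ 2 degB
  have eLA : L.card = A.card := by omega
  have degA' : ∀ a ∈ A, (nb G S a).card = 3 := by
    intro a ha
    have hs : ∑ v ∈ A, 3 = ∑ v ∈ A, (nb G S v).card := by simp; omega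
    exact ((Finset.sum_eq_sum_iff_of_le degA).1 hs a ha).symm
  have degB' : ∀ b ∈ B, (nb G S b).card = 2 := by
    intro b hb
    have hs : ∑ v ∈ B, 2 = ∑ v ∈ B, (nb G S v).card := by simp; omega
    exact ((Finset.sum_eq_sum_iff_of_le degB).1 hs b hb).symm
  rcases A.eq_empty_or_nonempty with hA0 | hAne
  · intro v hv
    have : L = ∅ := by rw [← Finset.card_eq_zero, eLA, hA0]; rfl
    exact degB' v (by simp [hB, this, hA0, hv])
  · exfalso
    have hBodd : Odd B.card := by
      have := h.odd
      rw [cS, eLA] at this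
      rw [Nat.odd_iff] at this ⊢
      omega
    have hnl : ∀ v ∈ S, ∀ u ∈ S, G.Adj v u → v ∈ L → nb G S v = {u} := by
      intro v hv u hu huv hvL
      obtain ⟨u', hu'⟩ := Finset.card_eq_one.1 (Finset.mem_filter.1 hvL).2
      have : u ∈ nb G S v := mem_nb.2 ⟨hu, huv⟩
      rw [hu', Finset.mem_singleton] at this
      rw [hu', this]
    obtain ⟨a, haA, b, hbB, hab⟩ : ∃ a ∈ A, ∃ b ∈ B, G.Adj a b := by
      by_contra! hcon
      have hS := h.conn (L ∪ A) hLAS (hAne.mono Finset.subset_union_right) (by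
        intro x hx y hy hxy
        rcases Finset.mem_union.1 hx with hx | hx
        · have := hnl x (Finset.filter_subset _ _ hx) y hy hxy hx
          exact Finset.mem_union_right _ (Finset.mem_filter.2
            ⟨hy, x, Finset.filter_subset _ _ hx, this⟩)
        · by_contra hyn
          exact hcon x hx y (Finset.mem_sdiff.2 ⟨hy, hyn⟩) hxy)
      rw [hB, hS] at hBodd
      simp at hBodd
    obtain ⟨haS, s, hsS, hsa⟩ := Finset.mem_filter.1 haA
    have hbS : b ∈ S := Finset.sdiff_subset hbB
    have hsadj := adj_of hsa
    have hs' : ∀ z ∈ S, G.Adj s z → z = a := fun z hz hsz => by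
      have : z ∈ nb G S s := mem_nb.2 ⟨hz, hsz⟩
      simpa [hsa] using this
    have hbn : b ∉ L ∪ A := (Finset.mem_sdiff.1 hbB).2
    have hsb : s ≠ b := by
      rintro rfl
      exact hbn (Finset.mem_union_left _ (Finset.mem_filter.2 ⟨hbS, by simp [hsa]⟩))
    have hsb' : ¬ G.Adj s b := fun hh => hab.ne (hs' b hbS hh).symm
    obtain ⟨c, hcS, hbc, hca, hbN⟩ := exists_other (degB' b hbB) haS hab.symm
    have key : ∀ d ∈ S, d ≠ b → G.Adj c d → G.Adj a d := by
      intro d hd hdb hcd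
      by_contra had
      refine h.wc.exchange {a, d} {a} {s, b} (by simp [Finset.insert_subset_iff, haS, hd])
        (isIndep_pair had) (by simp) (by simp [Finset.insert_subset_iff, hsS, hbS])
        (isIndep_pair hsb') (by rw [Finset.card_pair hsb]; simp) ?_ ?_
      · simp [hsadj, hab.symm]
      · intro n hn z hz hnz
        simp only [Finset.mem_insert, Finset.mem_singleton] at hn ⊢
        rcases hn with rfl | rfl
        · left; exact hs' z hz hnz
        · rcases hbN z hz hnz with rfl | rfl
          · simp
          · right; exact ⟨d, by simp, hcd⟩
    have hcL : c ∉ L := by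
      intro hcL
      have := hnl c hcS b hbS hbc.symm hcL
      exact hbn (Finset.mem_union_right _ (Finset.mem_filter.2 ⟨hbS, c, hcS, this⟩))
    have hcA : c ∉ A := by
      intro hcA
      obtain ⟨-, s', hsp_S, hsp_c⟩ := Finset.mem_filter.1 hcA
      have h1 := adj_of hsp_c
      have hne : s' ≠ b := by
        rintro rfl
        exact hbn (Finset.mem_union_left _ (Finset.mem_filter.2 ⟨hbS, by simp [hsp_c]⟩))
      have h2 := key s' hsp_S hne h1.symm
      have : a ∈ nb G S s' := mem_nb.2 ⟨haS, h2.symm⟩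
      rw [hsp_c, Finset.mem_singleton] at this
      exact hca this.symm
    have hcB : c ∈ B := Finset.mem_sdiff.2 ⟨hcS, by simp [hcL, hcA]⟩
    obtain ⟨d, hdS, hcd, hdb, hcN⟩ := exists_other (degB' c hcB) hbS hbc.symm
    have had := key d hdS hdb hcd
    have hsd : s ≠ d := by
      rintro rfl
      exact hca (hs' c hcS hcd.symm)
    have hac : ¬ G.Adj a c := fun hh => by
      rcases hcN a haS hh.symm with e | e
      · exact hab.ne e
      · exact had.ne e
    have hbd : ¬ G.Adj b d := fun hh => by
      rcases hbN d hdS hh with e | e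
      · exact had.ne e.symm
      · exact hcd.ne e.symm
    by_cases hdA : d ∈ A
    · obtain ⟨-, s', hsp_S, hsp_d⟩ := Finset.mem_filter.1 hdA
      have hsp_adj := adj_of hsp_d
      have hNs' : ∀ z ∈ S, G.Adj s' z → z = d := fun z hz hsz => by
        have : z ∈ nb G S s' := mem_nb.2 ⟨hz, hsz⟩
        simpa [hsp_d] using this
      have hss' : s ≠ s' := by
        rintro rfl
        exact had.ne (hs' d hdS hsp_adj).symm
      have hsp_a : s' ≠ a := fun e => hdb (hNs' b hbS (e ▸ hab)).symm
      have hsp_b : s' ≠ b := fun e => had.ne (hNs' a haS (e ▸ hab.symm))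
      have hsp_c : s' ≠ c := fun e => hdb (hNs' b hbS (e ▸ hbc.symm)).symm
      have hsc : s ≠ c := fun e => hab.ne (hs' b hbS (e ▸ hbc.symm)).symm
      have nbA : nb G S a = {s, b, d} := by
        symm
        apply Finset.eq_of_subset_of_card_le
        · intro z hz
          simp only [Finset.mem_insert, Finset.mem_singleton] at hz
          rcases hz with rfl | rfl | rfl
          · exact mem_nb.2 ⟨hsS, hsadj.symm⟩
          · exact mem_nb.2 ⟨hbS, hab⟩
          · exact mem_nb.2 ⟨hdS, had⟩
        · rw [degA' a haA, Finset.card_eq_three.2 ⟨s, b, d, hsb, hsd, hdb.symm, rfl⟩]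
      have nbD : nb G S d = {s', a, c} := by
        symm
        apply Finset.eq_of_subset_of_card_le
        · intro z hz
          simp only [Finset.mem_insert, Finset.mem_singleton] at hz
          rcases hz with rfl | rfl | rfl
          · exact mem_nb.2 ⟨hsp_S, hsp_adj.symm⟩
          · exact mem_nb.2 ⟨haS, had.symm⟩
          · exact mem_nb.2 ⟨hcS, hcd.symm⟩
        · rw [degA' d hdA, Finset.card_eq_three.2 ⟨s', a, c, hsp_a, hsp_c, hca.symm, rfl⟩]
      have hS := h.conn {a, s, b, c, d, s'} (by
        intro z hz
        simp only [Finset.mem_insert, Finset.mem_singleton] at hz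
        rcases hz with rfl | rfl | rfl | rfl | rfl | rfl <;> assumption) (by simp) (by
        intro x hx y hy hxy
        simp only [Finset.mem_insert, Finset.mem_singleton] at hx ⊢
        have hmem : y ∈ nb G S x := mem_nb.2 ⟨hy, hxy⟩
        rcases hx with rfl | rfl | rfl | rfl | rfl | rfl
        · rw [nbA] at hmem
          simp only [Finset.mem_insert, Finset.mem_singleton] at hmem
          rcases hmem with rfl | rfl | rfl <;> simp
        · simp [hs' y hy hxy]
        · rcases hbN y hy hxy with rfl | rfl <;> simp
        · rcases hcN y hy hxy with rfl | rfl <;> simp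
        · rw [nbD] at hmem
          simp only [Finset.mem_insert, Finset.mem_singleton] at hmem
          rcases hmem with rfl | rfl | rfl <;> simp
        · simp [hNs' y hy hxy])
      have hcard : ({a, s, b, c, d, s'} : Finset V).card = 6 := by
        have n1 := hab.ne
        have n2 := had.ne
        have n3 := hbc.ne
        have n4 := hcd.ne
        have n5 := hsadj.ne
        have n6 := hsp_adj.ne
        rw [Finset.card_insert_of_notMem, Finset.card_insert_of_notMem,
          Finset.card_insert_of_notMem, Finset.card_insert_of_notMem,
          Finset.card_insert_of_notMem, Finset.card_singleton] <;>
          simp [*, Ne.symm, n1.symm, n2.symm, n3.symm, n4.symm, n5.symm, n6.symm, hsp_a.symm,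
            hsp_b.symm, hsp_c.symm, hca.symm, hdb.symm]
      have ho := h.odd
      rw [← hS, hcard] at ho
      exact absurd ho (by decide)
    · have hdL : d ∉ L := by
        intro hdL
        have := hnl d hdS c hcS hcd.symm hdL
        have h' : a ∈ nb G S d := mem_nb.2 ⟨haS, had.symm⟩
        rw [this, Finset.mem_singleton] at h'
        exact hca h'.symm
      have hdB : d ∈ B := Finset.mem_sdiff.2 ⟨hdS, by simp [hdL, hdA]⟩
      have nbD : nb G S d = {a, c} := by
        symm
        apply Finset.eq_of_subset_of_card_le
        · intro z hz
          simp only [Finset.mem_insert, Finset.mem_singleton] at hz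
          rcases hz with rfl | rfl
          · exact mem_nb.2 ⟨haS, had.symm⟩
          · exact mem_nb.2 ⟨hcS, hcd.symm⟩
        · rw [degB' d hdB, Finset.card_pair hca.symm]
      have hsd' : ¬ G.Adj s d := fun hh => had.ne (hs' d hdS hh).symm
      refine h.wc.exchange {a, c} {a, c} {s, b, d}
        (by simp [Finset.insert_subset_iff, haS, hcS]) (isIndep_pair hac) le_rfl
        (by simp [Finset.insert_subset_iff, hsS, hbS, hdS]) (isIndep_triple hsb' hsd' hbd)
        (by rw [Finset.card_pair hca.symm, Finset.card_eq_three.2 ⟨s, b, d, hsb, hsd, hdb.symm, rfl⟩]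
            norm_num) ?_ ?_
      · simp [hsadj, hab.symm, had.symm]
      · intro n hn z hz hnz
        left
        simp only [Finset.mem_insert, Finset.mem_singleton] at hn ⊢
        rcases hn with rfl | rfl | rfl
        · left; exact hs' z hz hnz
        · exact hbN z hz hnz
        · have : z ∈ nb G S n := mem_nb.2 ⟨hz, hnz⟩
          simpa [nbD] using this

end

/-! ### Well-covered cycles -/


section
open Classical
set_option linter.unusedSectionVars false
variable {V : Type*} [DecidableEq V] {G : SimpleGraph V}

/-- The set `C` induces a cycle of length `g` in `G`, enumerated cyclically by `c`. -/
def IsCyc (G : SimpleGraph V) (g : ℕ) [NeZero g] (C : Finset V) (c : Fin g → V) : Prop :=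
  Function.Injective c ∧ C = Finset.univ.image c ∧
    ∀ i j, G.Adj (c i) (c j) ↔ j = i + 1 ∨ i = j + 1

/-- A walk in a `2`-regular graph that never turns back is injective before its first return. -/
lemma walk_inj {S : Finset V} {c : ℕ → V} (hS : ∀ i, c i ∈ S) (hadj : ∀ i, G.Adj (c i) (c (i + 1)))
    (hne : ∀ i, c (i + 2) ≠ c i)
    (hN : ∀ i, ∀ z ∈ S, G.Adj (c (i + 1)) z → z = c i ∨ z = c (i + 2)) {p : ℕ}
    (hp : ∀ q, 0 < q → q < p → c q ≠ c 0) : ∀ j < p, ∀ i < j, c i ≠ c j := by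
  intro j
  induction j using Nat.strong_induction_on with
  | _ j ih =>
    intro hjp i hij e
    rcases i with _ | i
    · exact hp j hij hjp e.symm
    · have h1 : j ≠ i + 2 := by
        rintro rfl
        exact (hadj (i + 1)).ne e
      have h2 : j ≠ i + 3 := by
        rintro rfl
        exact hne (i + 1) e.symm
      obtain ⟨j, rfl⟩ : ∃ k, j = k + 1 := ⟨j - 1, by omega⟩
      have h3 : G.Adj (c (i + 1)) (c j) := e ▸ (hadj j).symm
      rcases hN i _ (hS j) h3 with h4 | h4
      · exact ih j (by omega) (by omega) i (by omega) h4.symm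
      · exact ih j (by omega) (by omega) (i + 2) (by omega) h4.symm

/-- A connected well-covered `2`-regular graph of odd order is a cycle of length 3, 5 or 7. -/
lemma OddInv.cycle {S : Finset V} (h : OddInv G S) (h2 : ∀ v ∈ S, (nb G S v).card = 2) :
    (∃ c, IsCyc G 3 S c) ∨ (∃ c, IsCyc G 5 S c) ∨ (∃ c, IsCyc G 7 S c) := by
  have hSne : S.Nonempty := by
    rw [← Finset.card_pos]
    exact h.odd.pos
  obtain ⟨c0, hc0⟩ := hSne
  obtain ⟨c1, hc1⟩ : (nb G S c0).Nonempty := by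
    rw [← Finset.card_pos, h2 c0 hc0]; norm_num
  have hex : ∀ p : V × V, ∃ r, p.1 ∈ S → p.2 ∈ S → G.Adj p.2 p.1 →
      (r ∈ S ∧ G.Adj p.2 r ∧ r ≠ p.1 ∧ ∀ z ∈ S, G.Adj p.2 z → z = p.1 ∨ z = r) := by
    intro p
    by_cases hp : p.1 ∈ S ∧ p.2 ∈ S ∧ G.Adj p.2 p.1
    · obtain ⟨r, hr⟩ := exists_other (h2 p.2 hp.2.1) hp.1 hp.2.2
      exact ⟨r, fun _ _ _ => hr⟩
    · exact ⟨p.1, fun a b c => absurd ⟨a, b, c⟩ hp⟩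
  choose f hf using hex
  let d : ℕ → V × V := fun n => (fun p : V × V => (p.2, f p))^[n] (c0, c1)
  have d1 : ∀ n, d (n + 1) = ((d n).2, f (d n)) := fun n => Function.iterate_succ_apply' _ _ _
  have hd : ∀ n, (d n).1 ∈ S ∧ (d n).2 ∈ S ∧ G.Adj (d n).2 (d n).1 := by
    intro n
    induction n with
    | zero => exact ⟨hc0, (mem_nb.1 hc1).1, (mem_nb.1 hc1).2.symm⟩
    | succ n ih =>
      have := hf (d n) ih.1 ih.2.1 ih.2.2
      rw [d1]
      exact ⟨ih.2.1, this.1, this.2.1.symm⟩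
  obtain ⟨c, hc⟩ : ∃ c : ℕ → V, c = fun n => (d n).1 := ⟨_, rfl⟩
  have e1 : ∀ n, (d n).2 = c (n + 1) := fun n => by rw [hc]; simp only [d1]
  have e2 : ∀ n, f (d n) = c (n + 2) := fun n => by rw [← e1, d1]
  have hS : ∀ i, c i ∈ S := fun i => by rw [hc]; exact (hd i).1
  have hadj : ∀ i, G.Adj (c i) (c (i + 1)) := fun i => by
    rw [← e1, hc]; exact (hd i).2.2.symm
  have hfc : ∀ i, c (i + 2) ≠ c i ∧ ∀ z ∈ S, G.Adj (c (i + 1)) z → z = c i ∨ z = c (i + 2) := by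
    intro i
    have := hf (d i) (hd i).1 (hd i).2.1 (hd i).2.2
    rw [e2, e1] at this
    rw [show c i = (d i).1 by rw [hc]]
    exact this.2.2
  have hne := fun i => (hfc i).1
  have hN := fun i => (hfc i).2
  have inj := @walk_inj V _ G S c hS hadj hne hN
  by_cases hret : ∃ p, 0 < p ∧ c p = c 0
  · obtain ⟨hp0, hpc⟩ := Nat.find_spec hret
    have hmin : ∀ q, 0 < q → q < Nat.find hret → c q ≠ c 0 := fun q h0 hq e =>
      Nat.find_min hret hq ⟨h0, e⟩
    generalize Nat.find hret = p at hp0 hpc hmin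
    have hinj := inj hmin
    have h1 : p ≠ 1 := by rintro rfl; exact (hadj 0).ne hpc.symm
    have h2 : p ≠ 2 := by rintro rfl; exact hne 0 hpc
    obtain ⟨m, rfl⟩ : ∃ m, p = m + 3 := ⟨p - 3, by omega⟩
    have hwrap : c (m + 4) = c 1 := by
      have h3 : G.Adj (c (m + 3)) (c 1) := hpc ▸ hadj 0
      rcases hN (m + 2) _ (hS 1) h3 with h4 | h4
      · exact absurd h4 (hinj (m + 2) (by omega) 1 (by omega))
      · exact h4.symm
    have hX := h.conn ((Finset.range (m + 3)).image c) (by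
      intro z hz
      obtain ⟨i, -, rfl⟩ := Finset.mem_image.1 hz
      exact hS i) (by simp) (by
      intro a ha b hb hab
      obtain ⟨i, hi, rfl⟩ := Finset.mem_image.1 ha
      rw [Finset.mem_range] at hi
      have hw : ∀ k ≤ m + 4, c k ∈ (Finset.range (m + 3)).image c := by
        intro k hk
        by_cases hk1 : k < m + 3
        · exact Finset.mem_image_of_mem _ (Finset.mem_range.2 hk1)
        · rcases (by omega : k = m + 3 ∨ k = m + 4) with rfl | rfl
          · rw [hpc]; exact Finset.mem_image_of_mem _ (by simp)
          · rw [hwrap]; exact Finset.mem_image_of_mem _ (by simp)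
      rcases i with _ | i
      · rw [← hpc] at hab
        rcases hN (m + 2) b hb hab with rfl | rfl <;> exact hw _ (by omega)
      · rcases hN i b hb hab with rfl | rfl <;> exact hw _ (by omega))
    have hinj2 : ∀ i < m + 3, ∀ j < m + 3, c i = c j → i = j := by
      intro i hi j hj e
      rcases lt_trichotomy i j with hlt | rfl | hlt
      · exact absurd e (hinj j hj i hlt)
      · rfl
      · exact absurd e.symm (hinj i hi j hlt)
    have hcard : S.card = m + 3 := by
      rw [← hX, Finset.card_image_of_injOn, Finset.card_range]
      intro i hi j hj e
      exact hinj2 i (by simpa using hi) j (by simpa using hj) e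
    have hadj' : ∀ i j, i < j → j < m + 3 →
        (G.Adj (c i) (c j) ↔ j = i + 1 ∨ (i = 0 ∧ j = m + 2)) := by
      intro i j hij hj
      constructor
      · intro hh
        rcases i with _ | i
        · obtain ⟨j, rfl⟩ : ∃ k, j = k + 1 := ⟨j - 1, by omega⟩
          rcases hN j _ (hS 0) hh.symm with h4 | h4
          · left; have := hinj2 0 (by omega) j (by omega) h4; omega
          · right
            refine ⟨rfl, ?_⟩
            by_contra hcon
            have := hinj2 0 (by omega) (j + 2) (by omega) h4
            omega
        · rcases hN i _ (hS j) hh with h4 | h4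
          · have := hinj2 j (by omega) i (by omega) h4; omega
          · left
            exact hinj2 j (by omega) (i + 2) (by omega) h4
      · rintro (rfl | ⟨rfl, rfl⟩)
        · exact hadj i
        · rw [← hpc]; exact (hadj (m + 2)).symm
    have main : ∀ k [NeZero k], k = m + 3 →
        (∀ i j : Fin k, i < j → ((j = i + 1 ∨ i = j + 1) ↔
          (j.val = i.val + 1 ∨ (i.val = 0 ∧ j.val + 1 = k)))) →
        IsCyc G k S (fun i => c i.val) := by
      rintro k _ rfl hk
      refine ⟨fun i j e => Fin.ext (hinj2 _ i.2 _ j.2 e), ?_, ?_⟩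
      · rw [← hX]
        ext z
        simp only [Finset.mem_image, Finset.mem_range, Finset.mem_univ, true_and]
        constructor
        · rintro ⟨i, hi, rfl⟩; exact ⟨⟨i, hi⟩, rfl⟩
        · rintro ⟨i, rfl⟩; exact ⟨i.val, i.2, rfl⟩
      · have key : ∀ i j : Fin (m + 3), i < j →
            (G.Adj (c i.val) (c j.val) ↔ j = i + 1 ∨ i = j + 1) := by
          intro i j hij
          rw [hadj' i.val j.val hij j.2, hk i j hij]
          simp
        intro i j
        rcases lt_trichotomy i j with hlt | rfl | hlt
        · exact key i j hlt
        · simp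
        · rw [G.adj_comm, key j i hlt, or_comm]
    have hle : m ≤ 4 := by
      by_contra hcon
      have nine : ∀ i ≤ 7, ∀ j ≤ 7, c i = c j → i = j := fun i hi j hj =>
        hinj2 i (by omega) j (by omega)
      have nadj : ∀ i j, i + 1 ≤ 6 → j ≤ 7 → j ≠ i → j ≠ i + 2 → ¬ G.Adj (c (i + 1)) (c j) := by
        intro i j hi hj h1 h2 hh
        rcases hN i _ (hS j) hh with h4 | h4
        · exact h1 (nine j (by omega) i (by omega) h4)
        · exact h2 (nine j (by omega) (i + 2) (by omega) h4)
      refine h.wc.exchange {c 0, c 3, c 6} {c 3} {c 2, c 4} ?_ (isIndep_triple ?_ ?_ ?_) (by simp)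
        ?_ (isIndep_pair (nadj 1 4 (by omega) (by omega) (by omega) (by omega))) ?_ ?_ ?_
      · simp [Finset.insert_subset_iff, hS]
      · exact fun hh => nadj 2 0 (by omega) (by omega) (by omega) (by omega) hh.symm
      · exact fun hh => nadj 5 0 (by omega) (by omega) (by omega) (by omega) hh.symm
      · exact nadj 2 6 (by omega) (by omega) (by omega) (by omega)
      · simp [Finset.insert_subset_iff, hS]
      · rw [Finset.card_pair (hne 2).symm]; simp
      · simp only [Finset.mem_insert, Finset.mem_singleton]
        rintro n (rfl | rfl)
        · exact ⟨c 3, by simp, hadj 2⟩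
        · exact ⟨c 3, by simp, (hadj 3).symm⟩
      · simp only [Finset.mem_insert, Finset.mem_singleton]
        rintro n (rfl | rfl) z hz hnz
        · rcases hN 1 z hz hnz with rfl | rfl
          · right; exact ⟨c 0, by simp, (hadj 0).symm⟩
          · left; rfl
        · rcases hN 3 z hz hnz with rfl | rfl
          · left; rfl
          · right; exact ⟨c 6, by simp, hadj 5⟩
    have ho := h.odd
    rw [hcard, Nat.odd_iff] at ho
    rcases (by omega : m = 0 ∨ m = 2 ∨ m = 4) with rfl | rfl | rfl
    · left; exact ⟨_, main 3 rfl (by decide)⟩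
    · right; left; exact ⟨_, main 5 rfl (by decide)⟩
    · right; right; exact ⟨_, main 7 rfl (by decide)⟩
  · exfalso
    -- without a return the walk would be infinite and injective in a finite set
    push Not at hret
    have hinj : Function.Injective c := by
      intro i j e
      by_contra hij
      rcases lt_or_gt_of_ne hij with hlt | hlt
      · exact inj (p := j + 1) (fun q h0 _ => hret q h0) j (by omega) i hlt e
      · exact inj (p := i + 1) (fun q h0 _ => hret q h0) i (by omega) j hlt e.symm
    exact Set.infinite_range_of_injective hinj
      ((Finset.finite_toSet S).subset (by rintro _ ⟨i, rfl⟩; exact hS i))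

end

/-! ### The inductive construction -/


section
open Classical
set_option linter.unusedSectionVars false
variable {V : Type*} [DecidableEq V] {G : SimpleGraph V}

/-- `Built G C S A`: the set `S` is obtained from `C` by repeatedly attaching a path `w - u - v`
at a vertex `w` of `C` or of `A`, where `A` collects the vertices `u` of the earlier steps (so the
vertices `v` stay leaves). -/
inductive Built (G : SimpleGraph V) (C : Finset V) : Finset V → Finset V → Prop
  | base : Built G C C ∅
  | step {S A : Finset V} {u v w : V} : Built G C S A → u ∉ S → v ∉ S → G.Adj u v → w ∈ C ∪ A →
      (∀ z ∈ S, G.Adj u z ↔ z = w) → (∀ z ∈ S, ¬ G.Adj v z) →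
      Built G C (insert u (insert v S)) (insert u A)

lemma Built.subset {C S A : Finset V} (h : Built G C S A) : C ⊆ S ∧ A ⊆ S ∧ Disjoint C A := by
  induction h with
  | base => simp
  | @step S A u v w _ hu hv _ _ _ _ ih =>
    refine ⟨ih.1.trans (by grind), by have := ih.2.1; grind, ?_⟩
    rw [Finset.disjoint_insert_right]
    exact ⟨fun h => hu (ih.1 h), ih.2.2⟩

lemma Built.card {C S A : Finset V} (h : Built G C S A) : S.card = C.card + 2 * A.card := by
  induction h with
  | base => simp
  | @step S A u v w hb hu hv huv _ _ _ ih =>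
    rw [Finset.card_insert_of_notMem (by simp [hu, huv.ne]), Finset.card_insert_of_notMem hv,
      Finset.card_insert_of_notMem (fun h => hu (hb.subset.2.1 h)), ih]
    ring

/-- Vertices outside `C ∪ A` are leaves, and their neighbour is not a leaf. -/
lemma Built.leaf {C S A : Finset V} (h : Built G C S A) {s : V} (hs : s ∈ S) (hsn : s ∉ C ∪ A) :
    ∃ z ∈ S, ∃ z' ∈ S, z' ≠ s ∧ G.Adj z z' ∧ ∀ y ∈ S, G.Adj s y → y = z := by
  induction h with
  | base => simp at hsn; exact absurd hs hsn
  | @step S A u v w hb hu hv huv hw huS hvS ih =>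
    have hwS : w ∈ S := Finset.union_subset hb.subset.1 hb.subset.2.1 hw
    have hsu : s ≠ u := by rintro rfl; simp at hsn
    by_cases hsv : s = v
    · subst hsv
      refine ⟨u, by simp, w, by simp [hwS], fun e => hv (e ▸ hwS), (huS w hwS).2 rfl, ?_⟩
      intro y hy hsy
      rcases Finset.mem_insert.1 hy with rfl | hy
      · rfl
      · rcases Finset.mem_insert.1 hy with rfl | hy
        · exact absurd hsy (G.loopless.irrefl _)
        · exact absurd hsy (hvS y hy)
    · have hsS : s ∈ S := by simpa [hsu, hsv] using hs
      have hsn' : s ∉ C ∪ A := fun hh => hsn (by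
        rcases Finset.mem_union.1 hh with hh | hh <;> simp [hh])
      obtain ⟨z, hz, z', hz', h1, h2, h3⟩ := ih hsS hsn'
      refine ⟨z, by simp [hz], z', by simp [hz'], h1, h2, ?_⟩
      intro y hy hsy
      rcases Finset.mem_insert.1 hy with rfl | hy
      · exact absurd hw ((huS s hsS).1 hsy.symm ▸ hsn')
      · rcases Finset.mem_insert.1 hy with rfl | hy
        · exact absurd hsy.symm (hvS s hsS)
        · exact h3 y hy hsy

/-- The vertices of `A` with a neighbour in `C` have only one such neighbour, and are pairwise
nonadjacent. -/
lemma Built.attach {C S A : Finset V} (h : Built G C S A) :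
    (∀ a ∈ A, ∀ z ∈ C, ∀ z' ∈ C, G.Adj a z → G.Adj a z' → z = z') ∧
    (∀ a ∈ A, ∀ a' ∈ A, ∀ z ∈ C, ∀ z' ∈ C, G.Adj a z → G.Adj a' z' → ¬ G.Adj a a') := by
  induction h with
  | base => simp
  | @step S A u v w hb hu hv huv hw huS hvS ih =>
    obtain ⟨hC, hA, hd⟩ := hb.subset
    have new : ∀ a ∈ A, ∀ z ∈ C, G.Adj u z → ¬ G.Adj u a := by
      intro a ha z hz h1 h2
      have e1 := (huS z (hC hz)).1 h1
      have e2 := (huS a (hA ha)).1 h2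
      exact Finset.disjoint_left.1 hd hz (e1.trans e2.symm ▸ ha)
    refine ⟨?_, ?_⟩
    · intro a ha z hz z' hz' h1 h2
      rcases Finset.mem_insert.1 ha with rfl | ha
      · exact ((huS z (hC hz)).1 h1).trans ((huS z' (hC hz')).1 h2).symm
      · exact ih.1 a ha z hz z' hz' h1 h2
    · intro a ha a' ha' z hz z' hz' h1 h2
      rcases Finset.mem_insert.1 ha with rfl | hb
      · rcases Finset.mem_insert.1 ha' with rfl | hb'
        · exact G.loopless.irrefl _
        · exact new a' hb' z hz h1
      · rcases Finset.mem_insert.1 ha' with rfl | hb'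
        · exact fun hh => new a hb z' hz' h2 hh.symm
        · exact ih.2 a hb a' hb' z hz z' hz' h1 h2

lemma Built.card_le {C S A : Finset V} (h : Built G C S A) :
    ∀ M ⊆ S, IsIndepFinset G M → M.card ≤ A.card + (M ∩ C).card := by
  induction h with
  | base => intro M hM _; simp [Finset.inter_eq_left.2 hM]
  | @step S A u v w hb hu hv huv hw huS hvS ih =>
    intro M hM hi
    have h1 := ih (M ∩ S) Finset.inter_subset_right (isIndep_mono Finset.inter_subset_left hi)
    have h2 : M ∩ S ∩ C = M ∩ C := by
      rw [Finset.inter_assoc, Finset.inter_eq_right.2 hb.subset.1]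
    rw [h2] at h1
    rw [Finset.card_insert_of_notMem (fun h => hu (hb.subset.2.1 h))]
    -- `M` contains at most one of the adjacent vertices `u`, `v`
    have h3 : (M \ S).card ≤ 1 := by
      rw [Finset.card_le_one]
      intro a ha b hb'
      rw [Finset.mem_sdiff] at ha hb'
      have ha' := hM ha.1
      have hb'' := hM hb'.1
      simp only [Finset.mem_insert, ha.2, hb'.2, or_false] at ha' hb''
      rcases ha' with rfl | rfl <;> rcases hb'' with rfl | rfl
      · rfl
      · exact absurd huv (hi _ ha.1 _ hb'.1)
      · exact absurd huv (hi _ hb'.1 _ ha.1)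
      · rfl
    have := Finset.card_sdiff_add_card_inter M S
    omega

lemma Built.exists_indep {C S A : Finset V} (h : Built G C S A) {J : Finset V} (hJ : J ⊆ C)
    (hi : IsIndepFinset G J) : ∃ t ⊆ S, IsIndepFinset G t ∧ t.card = A.card + J.card := by
  induction h with
  | base => exact ⟨J, hJ, hi, by simp⟩
  | @step S A u v w hb hu hv huv hw huS hvS ih =>
    obtain ⟨t, ht, hti, hc⟩ := ih
    refine ⟨insert v t, ?_, isIndep_insert.2 ⟨hti, fun z hz => hvS z (ht hz)⟩, ?_⟩
    · exact (Finset.insert_subset_insert _ ht).trans (Finset.subset_insert _ _)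
    · rw [Finset.card_insert_of_notMem (fun h => hv (ht h)),
        Finset.card_insert_of_notMem (fun h => hu (hb.subset.2.1 h)), hc]
      ring

/-- If the graph is well-covered, an independent set `X` deciding all vertices of `C` contains as
many vertices of `C` as any independent subset of `C`: compare a maximal independent set containing
`X` with one containing all leaves. -/
lemma Built.count {C S A : Finset V} (h : Built G C S A) (hw : WC G S) {X J : Finset V}
    (hX : X ⊆ S) (hXi : IsIndepFinset G X) (hdom : ∀ z ∈ C, z ∉ X → ∃ y ∈ X, G.Adj z y)
    (hJ : J ⊆ C) (hJi : IsIndepFinset G J) : J.card ≤ (X ∩ C).card := by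
  obtain ⟨M, hXM, hM⟩ := exists_maxIndep hX hXi
  obtain ⟨t, ht, hti, hc⟩ := h.exists_indep hJ hJi
  have h1 := hw.card_le hM ht hti
  have h2 := h.card_le M hM.1 hM.2.1
  have h3 : (M ∩ C).card ≤ (X ∩ C).card := by
    apply Finset.card_le_card
    intro z hz
    rw [Finset.mem_inter] at hz ⊢
    refine ⟨?_, hz.2⟩
    by_contra hzX
    obtain ⟨y, hy, hzy⟩ := hdom z hz.2 hzX
    exact hM.2.1 z hz.1 y (hXM hy) hzy
  omega

/-- A tree representation of `G[C]` that allows attachments at all vertices of `C` with neighbours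
outside `C` extends to `G[S]`. -/
lemma Built.treeRep {C S A U U' : Finset V} (h : Built G C S A) (h0 : TreeRep G C U U')
    (hatt : ∀ a ∈ A, ∀ z ∈ C, G.Adj a z → z ∈ U') : TreeRep G S (U ∪ A) (U' ∪ A) := by
  induction h with
  | base => simpa using h0
  | @step S A u v w hb hu hv huv hw huS hvS ih =>
    have hwS : w ∈ S := Finset.union_subset hb.subset.1 hb.subset.2.1 hw
    have h1 := ih (fun a ha => hatt a (Finset.mem_insert_of_mem ha))
    rw [Finset.union_insert, Finset.union_insert]
    refine h1.step hu hv huv ?_ huS hvS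
    rcases Finset.mem_union.1 hw with hw | hw
    · exact Finset.mem_union_left _ (hatt u (Finset.mem_insert_self _ _) w hw ((huS w hwS).2 rfl))
    · exact Finset.mem_union_right _ hw

/-- The invariants are inherited when a pendant path of order two is removed. -/
lemma OddInv.remove {S : Finset V} {u v w : V} (h : OddInv G (insert u (insert v S))) (hu : u ∉ S)
    (hv : v ∉ S) (huv : G.Adj u v) (hw : w ∈ S) (huS : ∀ z ∈ S, G.Adj u z ↔ z = w)
    (hvS : ∀ z ∈ S, ¬ G.Adj v z) : OddInv G S := by
  have huv' : u ∉ insert v S := by simp [hu, huv.ne]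
  have hcard : (insert u (insert v S)).card = S.card + 2 := by
    rw [Finset.card_insert_of_notMem huv', Finset.card_insert_of_notMem hv]
  refine ⟨?_, ?_, ?_, ?_⟩
  · have := h.odd
    rw [hcard, Nat.odd_iff] at this
    rw [Nat.odd_iff]; omega
  · intro X hX hXne hcl
    by_cases hwX : w ∈ X
    · have := h.conn (insert u (insert v X)) (by grind) (by simp) (by
        intro a ha b hb hab
        simp only [Finset.mem_insert] at ha hb ⊢
        rcases hb with rfl | rfl | hb
        · simp
        · simp
        · rcases ha with rfl | rfl | ha
          · right; right; rwa [(huS b hb).1 hab]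
          · exact absurd hab (hvS b hb)
          · right; right; exact hcl a ha b hb hab)
      ext z
      have h1 := Finset.ext_iff.1 this z
      simp only [Finset.mem_insert] at h1
      have h2 : z = u → z ∉ S := fun e => e ▸ hu
      have h3 : z = v → z ∉ S := fun e => e ▸ hv
      have h4 := @hX z
      tauto
    · exfalso
      have := h.conn X (by grind) hXne (by
        intro a ha b hb hab
        simp only [Finset.mem_insert] at hb
        rcases hb with rfl | rfl | hb
        · exact absurd ((huS a (hX ha)).1 hab.symm ▸ ha) hwX
        · exact absurd hab.symm (hvS a (hX ha))
        · exact hcl a ha b hb hab)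
      exact hu (hX (this ▸ Finset.mem_insert_self _ _))
  · have hd := h.deg
    have e1 : nb G (insert u (insert v S)) u = {v, w} := by
      ext z
      have := huS z
      have h2 : z = v → G.Adj u z := fun e => e ▸ huv
      have h3 : z = u → ¬ G.Adj u z := fun e => e ▸ G.loopless.irrefl u
      have h4 : z = w → z ∈ S := fun e => e ▸ hw
      simp only [mem_nb, Finset.mem_insert, Finset.mem_singleton]
      tauto
    have e2 : nb G (insert u (insert v S)) v = {u} := by
      ext z
      have := hvS z
      have h2 : z = u → G.Adj v z := fun e => e ▸ huv.symm
      have h3 : z = v → ¬ G.Adj v z := fun e => e ▸ G.loopless.irrefl v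
      simp only [mem_nb, Finset.mem_insert, Finset.mem_singleton]
      tauto
    have e3 : ∀ s ∈ S, (nb G (insert u (insert v S)) s).card
        = (nb G S s).card + if s = w then 1 else 0 := by
      intro s hs
      have hsv : ¬ G.Adj s v := fun hh => hvS s hs hh.symm
      by_cases hsw : s = w
      · have hsu : G.Adj s u := ((huS s hs).2 hsw).symm
        rw [if_pos hsw, ← Finset.card_insert_of_notMem (s := nb G S s) (a := u)
          (fun hh => hu (mem_nb.1 hh).1)]
        congr 1
        simp only [nb, Finset.filter_insert, if_pos hsu, if_neg hsv]
      · have hsu : ¬ G.Adj s u := fun hh => hsw ((huS s hs).1 hh.symm)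
        rw [if_neg hsw, add_zero]
        simp only [nb, Finset.filter_insert, if_neg hsu, if_neg hsv]
    have hvw : v ≠ w := fun e => hv (e ▸ hw)
    rw [Finset.sum_insert huv', Finset.sum_insert hv, e1, e2, hcard, Finset.card_pair hvw,
      Finset.sum_congr rfl e3, Finset.sum_add_distrib, Finset.sum_ite_eq' S w, if_pos hw] at hd
    simp at hd
    omega
  · have ext : ∀ s, MaxIndep G S s → MaxIndep G (insert u (insert v S)) (insert v s) ∧
        (insert v s).card = s.card + 1 := by
      rintro s ⟨h1, h2, h3⟩
      refine ⟨⟨by grind, isIndep_insert.2 ⟨h2, fun z hz => hvS z (h1 hz)⟩, ?_⟩, ?_⟩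
      · intro z hz hzs
        simp only [Finset.mem_insert] at hz hzs
        push Not at hzs
        rcases hz with rfl | rfl | hz
        · exact ⟨v, by simp, huv⟩
        · exact absurd rfl hzs.1
        · obtain ⟨y, hy, hzy⟩ := h3 z hz hzs.2
          exact ⟨y, by simp [hy], hzy⟩
      · exact Finset.card_insert_of_notMem fun hh => hv (h1 hh)
    intro s t hs ht
    obtain ⟨a1, a2⟩ := ext s hs
    obtain ⟨b1, b2⟩ := ext t ht
    have := h.wc _ _ a1 b1
    omega

/-- A connected well-covered unicyclic graph of odd order arises from a cycle of length 3, 5 or 7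
by attaching paths of order two. -/
lemma OddInv.built (n : ℕ) : ∀ S : Finset V, S.card = n → OddInv G S → ∃ C A, Built G C S A ∧
    ((∃ c, IsCyc G 3 C c) ∨ (∃ c, IsCyc G 5 C c) ∨ (∃ c, IsCyc G 7 C c)) := by
  induction n using Nat.strong_induction_on with
  | _ n ih =>
    intro S hn h
    by_cases hno : ∃ u ∈ S, ∃ v ∈ S, ∃ w ∈ S, v ≠ w ∧ nb G S v = {u} ∧ nb G S u = {v, w}
    · obtain ⟨u, hu, v, hv, w, hw, hvw, hnv, hnu⟩ := hno
      have hvN : ∀ z ∈ S, G.Adj v z ↔ z = u := fun z hz => by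
        have := Finset.ext_iff.1 hnv z
        simpa [mem_nb, hz] using this
      have huN : ∀ z ∈ S, G.Adj u z ↔ z = v ∨ z = w := fun z hz => by
        have := Finset.ext_iff.1 hnu z
        simpa [mem_nb, hz] using this
      have huv : G.Adj u v := (huN v hv).2 (Or.inl rfl)
      have huw : G.Adj u w := (huN w hw).2 (Or.inr rfl)
      obtain ⟨S', hS'⟩ : ∃ S', S' = (S.erase u).erase v := ⟨_, rfl⟩
      have hS : S = insert u (insert v S') := by
        rw [hS', Finset.insert_erase (by simp [hv, huv.ne']), Finset.insert_erase hu]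
      have mem' : ∀ {z}, z ∈ S' ↔ z ≠ v ∧ z ≠ u ∧ z ∈ S := fun {z} => by rw [hS']; simp
      have hu' : u ∉ S' := fun hh => (mem'.1 hh).2.1 rfl
      have hv' : v ∉ S' := fun hh => (mem'.1 hh).1 rfl
      have hw' : w ∈ S' := mem'.2 ⟨hvw.symm, huw.ne', hw⟩
      have huS : ∀ z ∈ S', G.Adj u z ↔ z = w := fun z hz => by
        obtain ⟨h1, -, h2⟩ := mem'.1 hz
        rw [huN z h2]; simp [h1]
      have hvS : ∀ z ∈ S', ¬ G.Adj v z := fun z hz => by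
        obtain ⟨-, h1, h2⟩ := mem'.1 hz
        rw [hvN z h2]; exact h1
      have hO : OddInv G S' := OddInv.remove (hS ▸ h) hu' hv' huv hw' huS hvS
      have hlt : S'.card < n := by
        rw [← hn, hS']
        exact (Finset.card_erase_le).trans_lt (Finset.card_erase_lt_of_mem hu)
      obtain ⟨C, A, hB, hcyc⟩ := ih _ hlt S' rfl hO
      refine ⟨C, insert u A, ?_, hcyc⟩
      rw [hS]
      refine hB.step hu' hv' huv ?_ huS hvS
      by_contra hwn
      obtain ⟨z, hz, z', hz', h1, h2, h3⟩ := hB.leaf hw' hwn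
      obtain ⟨hz'v, hz'u, hz'S⟩ := mem'.1 hz'
      refine h.wc.exchange {z', u} {u} {v, w} (by simp [Finset.insert_subset_iff, hz'S, hu])
        (isIndep_pair fun hh => ?_) (by simp) (by simp [Finset.insert_subset_iff, hv, hw])
        (isIndep_pair fun hh => huw.ne' ((hvN w hw).1 hh)) (by rw [Finset.card_pair hvw]; simp)
        ?_ ?_
      · exact h1 ((huS z' hz').1 hh.symm)
      · simp [huv.symm, huw.symm]
      · simp only [Finset.mem_insert, Finset.mem_singleton]
        rintro m (rfl | rfl) y hy hmy
        · left; exact (hvN y hy).1 hmy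
        · by_cases hyu : y = u
          · left; exact hyu
          · right
            have hyv : y ≠ v := by
              rintro rfl
              exact huw.ne' ((hvN m hw).1 hmy.symm)
            rw [h3 y (mem'.2 ⟨hyv, hyu, hy⟩) hmy]
            exact ⟨z', by simp, h2⟩
    · refine ⟨S, ∅, .base, h.cycle (h.regular ?_)⟩
      intro u hu v hv w hw h1 h2 h3
      exact hno ⟨u, hu, v, hv, w, hw, h1, h2, h3⟩

end

/-! ### Tree representations of well-covered unicyclic graphs -/


section
open Classical
set_option linter.unusedSectionVars false
variable {V : Type*} [DecidableEq V] {G : SimpleGraph V}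

lemma IP_singleton (v : V) (x : ℝ) : IP G {v} x = 1 + x := by
  rw [← insert_empty_eq v, IP_insert (by simp)]
  simp [IP_empty]

lemma singleton_sdiff_ite (a : V) (D : Finset V) : {a} \ D = if a ∈ D then ∅ else {a} := by
  split_ifs with h <;> grind

lemma IsCyc.rotate {g : ℕ} [NeZero g] {C : Finset V} {c : Fin g → V} (h : IsCyc G g C c)
    (k : Fin g) : IsCyc G g C (fun i => c (i + k)) := by
  refine ⟨fun i j e => add_right_cancel (h.1 e), ?_, fun i j => ?_⟩
  · rw [h.2.1]
    ext z
    simp only [Finset.mem_image, Finset.mem_univ, true_and]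
    constructor
    · rintro ⟨i, rfl⟩; exact ⟨i - k, by simp⟩
    · rintro ⟨i, rfl⟩; exact ⟨_, rfl⟩
  · rw [h.2.2, add_right_comm i k 1, add_right_comm j k 1, add_left_inj, add_left_inj]

lemma IsCyc.mem {g : ℕ} [NeZero g] {C : Finset V} {c : Fin g → V} (h : IsCyc G g C c)
    (i : Fin g) : c i ∈ C := by rw [h.2.1]; exact Finset.mem_image_of_mem _ (Finset.mem_univ i)

lemma IsCyc.card {g : ℕ} [NeZero g] {C : Finset V} {c : Fin g → V} (h : IsCyc G g C c) :
    C.card = g := by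
  rw [h.2.1, Finset.card_image_of_injective _ h.1, Finset.card_fin]

lemma IsCyc.eq3 {C : Finset V} {c : Fin 3 → V} (h : IsCyc G 3 C c) : C = {c 0, c 1, c 2} := by
  rw [h.2.1]
  ext z
  simp only [Finset.mem_image, Finset.mem_univ, true_and, Finset.mem_insert, Finset.mem_singleton]
  constructor
  · rintro ⟨i, rfl⟩
    fin_cases i <;> simp
  · rintro h
    casesm* _ ∨ _ <;> exact ⟨_, Eq.symm (by assumption)⟩

lemma IsCyc.eq5 {C : Finset V} {c : Fin 5 → V} (h : IsCyc G 5 C c) :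
    C = {c 0, c 1, c 2, c 3, c 4} := by
  rw [h.2.1]
  ext z
  simp only [Finset.mem_image, Finset.mem_univ, true_and, Finset.mem_insert, Finset.mem_singleton]
  constructor
  · rintro ⟨i, rfl⟩
    fin_cases i <;> simp
  · rintro h
    casesm* _ ∨ _ <;> exact ⟨_, Eq.symm (by assumption)⟩

lemma IsCyc.eq7 {C : Finset V} {c : Fin 7 → V} (h : IsCyc G 7 C c) :
    C = {c 0, c 1, c 2, c 3, c 4, c 5, c 6} := by
  rw [h.2.1]
  ext z
  simp only [Finset.mem_image, Finset.mem_univ, true_and, Finset.mem_insert, Finset.mem_singleton]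
  constructor
  · rintro ⟨i, rfl⟩
    fin_cases i <;> simp
  · rintro h
    casesm* _ ∨ _ <;> exact ⟨_, Eq.symm (by assumption)⟩

lemma IsCyc.IP_seven {C : Finset V} {c : Fin 7 → V} (h : IsCyc G 7 C c) (x : ℝ) :
    IP G C x = 1 + 7 * x + 14 * x ^ 2 + 7 * x ^ 3 := by
  rw [h.eq7]
  simp [IP_insert, IP_empty, IP_singleton, Finset.filter_insert, Finset.filter_singleton, h.2.2,
    h.1.eq_iff]
  ring

/-- The triangle corresponds to the tree on two of its vertices. -/
lemma IsCyc.treeRep3 {C : Finset V} {c : Fin 3 → V} (h : IsCyc G 3 C c) :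
    TreeRep G C {c 0, c 1} {c 0, c 1} := by
  refine ⟨le_rfl, by rw [h.eq3]; grind, ?_, ?_⟩
  · refine TreeSet.leaf (w := c 1) (.single _) (by simp [h.1.eq_iff]) (by simp) ?_
    simp [h.2.2]
  · intro x hx D hD
    have hx0 : 1 + x ≠ 0 := by linarith
    rw [h.eq3, Finset.card_pair (by simp [h.1.eq_iff])]
    have h2 : c 2 ∉ D := fun hh => by simpa [h.1.eq_iff] using hD hh
    by_cases h0 : c 0 ∈ D <;> by_cases h1 : c 1 ∈ D <;>
      simp [IP_insert, IP_empty, IP_singleton, Finset.filter_insert, Finset.filter_singleton, h.2.2,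
        h.1.eq_iff, Finset.insert_sdiff_of_mem, Finset.insert_sdiff_of_notMem, h0, h1, h2,
        singleton_sdiff_ite] <;>
      field_simp

/-- The 5-cycle corresponds to the path on three consecutive vertices. -/
lemma IsCyc.treeRep5 {C : Finset V} {c : Fin 5 → V} (h : IsCyc G 5 C c) :
    TreeRep G C {c 0, c 1, c 2} {c 0, c 2} := by
  refine ⟨by grind, by rw [h.eq5]; grind, ?_, ?_⟩
  · refine TreeSet.leaf (w := c 1) (TreeSet.leaf (w := c 2) (.single _) (by simp [h.1.eq_iff])
      (by simp) ?_) (by simp [h.1.eq_iff]) (by simp) ?_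
    · simp [h.2.2]
    · simp [h.2.2, h.1.eq_iff]
  · intro x hx D hD
    have hx0 : 1 + x ≠ 0 := by linarith
    rw [h.eq5, Finset.card_eq_three.2 ⟨c 0, c 1, c 2, by simp [h.1.eq_iff], by simp [h.1.eq_iff],
      by simp [h.1.eq_iff], rfl⟩]
    have h1 : c 1 ∉ D := fun hh => by simpa [h.1.eq_iff] using hD hh
    have h3 : c 3 ∉ D := fun hh => by simpa [h.1.eq_iff] using hD hh
    have h4 : c 4 ∉ D := fun hh => by simpa [h.1.eq_iff] using hD hh
    by_cases h0 : c 0 ∈ D <;> by_cases h2 : c 2 ∈ D <;>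
      simp [IP_insert, IP_empty, IP_singleton, Finset.filter_insert, Finset.filter_singleton, h.2.2,
        h.1.eq_iff, Finset.insert_sdiff_of_mem, Finset.insert_sdiff_of_notMem, h0, h1, h2, h3, h4,
        singleton_sdiff_ite] <;>
      field_simp <;> ring

/-- A cycle vertex `z` carries an attached path. -/
def Att (G : SimpleGraph V) (A : Finset V) (z : V) : Prop := ∃ a ∈ A, G.Adj a z

lemma Built.eq_empty {C S A : Finset V} (h : Built G C S A) (hno : ∀ z ∈ C, ¬ Att G A z) :
    A = ∅ := by
  induction h with
  | base => rfl
  | @step S A u v w hb hu hv huv hw huS hvS ih =>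
    exfalso
    have h0 : A = ∅ := ih fun z hz ⟨a, ha, haz⟩ => hno z hz ⟨a, by simp [ha], haz⟩
    have hwC : w ∈ C := by simpa [h0] using hw
    exact hno w hwC ⟨u, by simp, (huS w (hb.subset.1 hwC)).2 rfl⟩

/-- In the triangle case some vertex of the triangle carries no attached path. -/
lemma Built.free3 {C S A : Finset V} (h : Built G C S A) (hw : WC G S) {c : Fin 3 → V}
    (hc : IsCyc G 3 C c) : ∃ k, ¬ Att G A (c k) := by
  by_contra! hall
  choose a ha hadj using hall
  obtain ⟨-, hAS, hd⟩ := h.subset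
  have := h.count hw (X := Finset.univ.image a) (J := {c 0})
    (by intro z hz; obtain ⟨i, -, rfl⟩ := Finset.mem_image.1 hz; exact hAS (ha i))
    (by
      intro y hy z hz
      obtain ⟨i, -, rfl⟩ := Finset.mem_image.1 hy
      obtain ⟨j, -, rfl⟩ := Finset.mem_image.1 hz
      exact h.attach.2 _ (ha i) _ (ha j) _ (hc.mem i) _ (hc.mem j) (hadj i) (hadj j))
    (by
      intro z hz _
      rw [hc.2.1] at hz
      obtain ⟨i, -, rfl⟩ := Finset.mem_image.1 hz
      exact ⟨a i, Finset.mem_image_of_mem _ (Finset.mem_univ i), (hadj i).symm⟩)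
    (by simpa using hc.mem 0) (by simp [IsIndepFinset])
  have h0 : Finset.univ.image a ∩ C = ∅ := by
    rw [← Finset.disjoint_iff_inter_eq_empty, Finset.disjoint_right]
    intro z hz hz'
    obtain ⟨i, -, rfl⟩ := Finset.mem_image.1 hz'
    exact Finset.disjoint_left.1 hd hz (ha i)
  simp [h0] at this

lemma Built.not_adj {C S A : Finset V} (h : Built G C S A) {g : ℕ} [NeZero g] {c : Fin g → V}
    (hc : IsCyc G g C c) {a : V} {i j : Fin g} (ha : a ∈ A) (hai : G.Adj a (c i)) (hij : i ≠ j) :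
    ¬ G.Adj a (c j) := fun hh =>
  hij (hc.1 (h.attach.1 a ha _ (hc.mem i) _ (hc.mem j) hai hh))

/-- In the 5-cycle case consecutive vertices do not both carry attached paths. -/
lemma Built.free5 {C S A : Finset V} (h : Built G C S A) (hw : WC G S) {c : Fin 5 → V}
    (hc : IsCyc G 5 C c) (h0 : Att G A (c 0)) (h1 : Att G A (c 1)) : False := by
  obtain ⟨a, ha, ha0⟩ := h0
  obtain ⟨b, hb, hb1⟩ := h1
  obtain ⟨hCS, hAS, hd⟩ := h.subset
  have haC : a ∉ C := fun hh => Finset.disjoint_left.1 hd hh ha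
  have hbC : b ∉ C := fun hh => Finset.disjoint_left.1 hd hh hb
  have := h.count hw (X := {a, b, c 3}) (J := {c 0, c 2})
    (by simp [Finset.insert_subset_iff, hAS ha, hAS hb, hCS (hc.mem 3)])
    (isIndep_triple (h.attach.2 _ ha _ hb _ (hc.mem 0) _ (hc.mem 1) ha0 hb1)
      (h.not_adj hc ha ha0 (by decide)) (h.not_adj hc hb hb1 (by decide)))
    (by
      rw [hc.eq5]
      simp [ha0.symm, hb1.symm, hc.2.2])
    (by simp [Finset.insert_subset_iff, hc.mem]) (isIndep_pair (by simp [hc.2.2]))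
  rw [Finset.insert_inter_of_notMem haC, Finset.insert_inter_of_notMem hbC,
    Finset.singleton_inter_of_mem (hc.mem 3), Finset.card_pair (by simp [hc.1.eq_iff])] at this
  simp at this

/-- In the 7-cycle case nothing is attached. -/
lemma Built.free7 {C S A : Finset V} (h : Built G C S A) (hw : WC G S) {c : Fin 7 → V}
    (hc : IsCyc G 7 C c) (h0 : Att G A (c 0)) : False := by
  obtain ⟨a, ha, ha0⟩ := h0
  obtain ⟨hCS, hAS, hd⟩ := h.subset
  have haC : a ∉ C := fun hh => Finset.disjoint_left.1 hd hh ha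
  have := h.count hw (X := {a, c 2, c 5}) (J := {c 0, c 2, c 4})
    (by simp [Finset.insert_subset_iff, hAS ha, hCS (hc.mem _)])
    (isIndep_triple (h.not_adj hc ha ha0 (by decide)) (h.not_adj hc ha ha0 (by decide))
      (by simp [hc.2.2]))
    (by
      rw [hc.eq7]
      simp [ha0.symm, hc.2.2])
    (by simp [Finset.insert_subset_iff, hc.mem])
    (isIndep_triple (by simp [hc.2.2]) (by simp [hc.2.2]) (by simp [hc.2.2]))
  rw [Finset.insert_inter_of_notMem haC, Finset.insert_inter_of_mem (hc.mem 2),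
    Finset.singleton_inter_of_mem (hc.mem 5), Finset.card_pair (by simp [hc.1.eq_iff]),
    Finset.card_eq_three.2 ⟨c 0, c 2, c 4, by simp [hc.1.eq_iff], by simp [hc.1.eq_iff],
      by simp [hc.1.eq_iff], rfl⟩] at this
  omega

/-- Every connected well-covered unicyclic graph of odd order other than the 7-cycle has a tree
representation. -/
lemma OddInv.treeRep {S : Finset V} (h : OddInv G S) :
    (∃ U U', TreeRep G S U U' ∧ 2 * U.card = S.card + 1) ∨ ∃ c, IsCyc G 7 S c := by
  obtain ⟨C, A, hB, hcyc⟩ := OddInv.built _ S rfl h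
  have hcard := hB.card
  obtain ⟨-, -, hd⟩ := hB.subset
  have fin : ∀ U U', TreeRep G C U U' → (∀ z ∈ C, Att G A z → z ∈ U') → 2 * U.card = C.card + 1 →
      ∃ U U', TreeRep G S U U' ∧ 2 * U.card = S.card + 1 := by
    intro U U' h1 h2 h3
    refine ⟨U ∪ A, U' ∪ A, hB.treeRep h1 fun a ha z hz haz => h2 z hz ⟨a, ha, haz⟩, ?_⟩
    rw [Finset.card_union_of_disjoint (hd.mono_left h1.2.1)]
    omega
  rcases hcyc with ⟨c, hc⟩ | ⟨c, hc⟩ | ⟨c, hc⟩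
  · left
    obtain ⟨k, hk⟩ := hB.free3 h.wc hc
    have hc' := hc.rotate (k + 1)
    refine fin _ _ hc'.treeRep3 ?_ ?_
    · intro z hz hatt
      rw [hc'.eq3] at hz
      simp only [Finset.mem_insert, Finset.mem_singleton] at hz ⊢
      rcases hz with hz | hz | hz
      · exact Or.inl hz
      · exact Or.inr hz
      · have e := (by decide : ∀ k : Fin 3, 2 + (k + 1) = k) k
        rw [e] at hz
        exact absurd (hz ▸ hatt) hk
    · rw [hc.card, Finset.card_pair (by simp [hc.1.eq_iff])]
  · left
    have hfree : ∀ i, ¬ (Att G A (c i) ∧ Att G A (c (i + 1))) := by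
      rintro i ⟨h1, h2⟩
      refine hB.free5 h.wc (hc.rotate i) (by simpa using h1) ?_
      rwa [add_comm]
    have comb : ∀ p : Fin 5 → Bool, (∀ i, ¬ (p i = true ∧ p (i + 1) = true)) →
        ∃ k, ∀ i, p (i + k) = true → i = 0 ∨ i = 2 := by decide
    obtain ⟨k, hk⟩ := comb (fun i => decide (Att G A (c i))) (by simpa using hfree)
    have hc' := hc.rotate k
    refine fin _ _ hc'.treeRep5 ?_ ?_
    · intro z hz hatt
      rw [hc'.2.1] at hz
      obtain ⟨i, -, rfl⟩ := Finset.mem_image.1 hz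
      rcases hk i (by simpa using hatt) with rfl | rfl <;> simp
    · rw [hc.card, Finset.card_eq_three.2 ⟨_, _, _, by simp [hc.1.eq_iff], by simp [hc.1.eq_iff],
        by simp [hc.1.eq_iff], rfl⟩]
  · right
    have hA : A = ∅ := hB.eq_empty (by
      intro z hz hatt
      rw [hc.2.1] at hz
      obtain ⟨i, -, rfl⟩ := Finset.mem_image.1 hz
      exact hB.free7 h.wc (hc.rotate i) (by simpa using hatt))
    subst hA
    have hS : C = S := Finset.eq_of_subset_of_card_le hB.subset.1 (by simp [hcard])
    exact ⟨c, hS ▸ hc⟩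

end

/-! ### The extremal graphs -/


section
open Classical
set_option linter.unusedSectionVars false
variable {V : Type*} [DecidableEq V] {G : SimpleGraph V}

lemma IP_map {V' : Type*} [DecidableEq V'] {H : SimpleGraph V'} (f : V ↪ V')
    (hf : ∀ a b, H.Adj (f a) (f b) ↔ G.Adj a b) (S : Finset V) (x : ℝ) :
    IP H (S.map f) x = IP G S x := by
  induction hn : S.card using Nat.strong_induction_on generalizing S with
  | _ n ih =>
    rcases S.eq_empty_or_nonempty with rfl | ⟨v, hv⟩
    · simp [IP_empty]
    · rw [IP_erase hv, IP_erase (v := f v) (Finset.mem_map_of_mem f hv), ← Finset.map_erase,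
        ih _ (hn ▸ Finset.card_erase_lt_of_mem hv) _ rfl, Finset.filter_map]
      congr 2
      rw [← ih (S.filter fun u => u ≠ v ∧ ¬ G.Adj v u).card ?_ _ rfl]
      · congr 2
        ext z
        simp [hf]
      · rw [← hn]
        apply Finset.card_lt_card
        rw [Finset.filter_ssubset]
        exact ⟨v, hv, by simp⟩

/-- `f` arises from the independence polynomial of the tree `t` by the substitution
`x ↦ x / (1 + x)` and multiplication with a power of `1 + x`. -/
def RepF (f : ℝ → ℝ) (t : RT) : Prop :=
  ∀ x, -1 < x → f x = (1 + x) ^ (t.sz - 1) * t.val (-(x / (1 + x)))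

lemma TreeRep.repF {S U U' : Finset V} (h : TreeRep G S U U') :
    ∃ t : RT, t.sz = U.card ∧ RepF (fun x => IP G S x) t := by
  obtain ⟨t, ht, hv⟩ := h.2.2.1.exists_RT_val
  refine ⟨t, ht, fun x hx => ?_⟩
  have := h.2.2.2 x hx ∅ (by simp)
  simp only [Finset.sdiff_empty] at this
  simp only [this, hv, ht]

/-- Attaching a chain of pendant pairs `p (j + 1), q j`, starting at `p 0`, lengthens a path in the
tree representation. -/
lemma IP_chain (S : ℕ → Finset V) (p q : ℕ → V) (N : ℕ)
    (hS : ∀ j < N, S (j + 1) = insert (p (j + 1)) (insert (q j) (S j)))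
    (hp : ∀ j < N, p (j + 1) ∉ S j) (hq : ∀ j < N, q j ∉ S j)
    (hpq : ∀ j < N, G.Adj (p (j + 1)) (q j))
    (hpS : ∀ j < N, ∀ z ∈ S j, G.Adj (p (j + 1)) z ↔ z = p j)
    (hqS : ∀ j < N, ∀ z ∈ S j, ¬ G.Adj (q j) z) {x α : ℝ} (hx : -1 < x) {m : ℕ}
    (h0 : IP G (S 0) x = α * W (-(x / (1 + x))) (m + 1))
    (h1 : IP G ((S 0).erase (p 0)) x = α * W (-(x / (1 + x))) m) :
    ∀ j ≤ N, IP G (S j) x = α * (1 + x) ^ j * W (-(x / (1 + x))) (m + 1 + j) ∧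
      IP G ((S j).erase (p j)) x = α * (1 + x) ^ j * W (-(x / (1 + x))) (m + j) := by
  have hx0 : 1 + x ≠ 0 := by linarith
  intro j
  induction j with
  | zero => intro _; simp [h0, h1]
  | succ j ih =>
    intro hj
    obtain ⟨i0, i1⟩ := ih (by omega)
    have hne : p (j + 1) ≠ q j := (hpq j hj).ne
    rw [hS j hj]
    constructor
    · have e : ((S j).filter fun z => ¬ G.Adj (p (j + 1)) z) = (S j).erase (p j) := by
        ext z
        have := hpS j hj z
        simp only [Finset.mem_filter, Finset.mem_erase]
        tauto
      rw [IP_pendant (hp j hj) (hq j hj) (hpq j hj) (hqS j hj), e, i0, i1,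
        show m + 1 + (j + 1) = m + j + 2 by ring, W_succ, show m + 1 + j = m + j + 1 by ring,
        pow_succ]
      field_simp
      ring
    · rw [Finset.erase_insert (by simp [hp j hj, hne]), IP_isolated (hq j hj) (hqS j hj), i0,
        show m + (j + 1) = m + 1 + j by ring, pow_succ]
      ring

/-- The graph `SPgraph g k ℓ` with vertex set extended to all natural numbers. -/
def SPnat (g k ℓ : ℕ) : SimpleGraph ℕ :=
  SimpleGraph.fromRel (fun i j =>
    (i < g ∧ j < g ∧ (j = i + 1 ∨ (i = 0 ∧ j = g - 1))) ∨
    (i = 0 ∧ 0 < k ∧ j = g) ∨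
    (g ≤ i ∧ i < g + 2*k ∧ (i - g) % 2 = 0 ∧
      (j = i + 1 ∨ (j = i + 2 ∧ j < g + 2*k))) ∨
    (i = 2 ∧ 0 < ℓ ∧ j = g + 2*k) ∨
    (g + 2*k ≤ i ∧ (i - (g + 2*k)) % 2 = 0 ∧
      (j = i + 1 ∨ j = i + 2)))

lemma IP_SPgraph (g k ℓ : ℕ) (x : ℝ) :
    IP (SPgraph g k ℓ) Finset.univ x = IP (SPnat g k ℓ) (Finset.range (g + 2*k + 2*ℓ)) x := by
  rw [← IP_map (H := SPnat g k ℓ) (G := SPgraph g k ℓ) Fin.valEmbedding]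
  · congr 1
    ext z
    simp
  · intro a b
    simp [SPnat, SPgraph, Fin.ext_iff]

/-- Attaching the chain of `ℓ` pairs at the vertex `2` of a part `T` of the cycle. -/
lemma IP_SP_tail (g k ℓ : ℕ) (hg : g = 3 ∨ g = 5) (T : Finset ℕ) (hT : T ⊆ Finset.range g)
    {x α : ℝ} (hx : -1 < x) {m : ℕ}
    (h0 : IP (SPnat g k ℓ) T x = α * W (-(x / (1 + x))) (m + 1))
    (h1 : IP (SPnat g k ℓ) (T.erase 2) x = α * W (-(x / (1 + x))) m) :
    IP (SPnat g k ℓ) (T ∪ Finset.Ico (g + 2*k) (g + 2*k + 2*ℓ)) x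
      = α * (1 + x) ^ ℓ * W (-(x / (1 + x))) (m + 1 + ℓ) := by
  have hTg : ∀ z ∈ T, z < g := fun z hz => by simpa using hT hz
  refine (IP_chain (G := SPnat g k ℓ) (fun j => T ∪ Finset.Ico (g + 2*k) (g + 2*k + 2*j))
    (fun j => if j = 0 then 2 else g + 2*k + 2*(j-1)) (fun j => g + 2*k + 2*j + 1) ℓ
    ?_ ?_ ?_ ?_ ?_ ?_ hx (by simpa using h0) (by simpa using h1) ℓ le_rfl).1
  · intro j hj
    ext z
    simp
    by_cases z ∈ T <;> simp [*]
    omega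
  · intro j hj hh
    simp at hh
    have := hTg _ hh
    omega
  · intro j hj hh
    simp at hh
    have := hTg _ hh
    omega
  · intro j hj
    simp [SPnat]
  · intro j hj z hz
    have hz' : z < g ∨ (g + 2*k ≤ z ∧ z < g + 2*k + 2*j) := by
      rcases Finset.mem_union.1 hz with h | h
      · exact Or.inl (hTg z h)
      · exact Or.inr (by simpa using h)
    simp [SPnat]
    split_ifs <;> rcases hg with rfl | rfl <;> omega
  · intro j hj z hz
    have hz' : z < g ∨ (g + 2*k ≤ z ∧ z < g + 2*k + 2*j) := by
      rcases Finset.mem_union.1 hz with h | h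
      · exact Or.inl (hTg z h)
      · exact Or.inr (by simpa using h)
    simp [SPnat]
    rcases hg with rfl | rfl <;> omega

lemma isCyc_SP3 (k ℓ : ℕ) : IsCyc (SPnat 3 k ℓ) 3 (Finset.range 3) (fun i => i.val) := by
  refine ⟨Fin.val_injective, by ext z; simp [Fin.exists_iff], ?_⟩
  intro i j
  fin_cases i <;> fin_cases j <;> simp [SPnat]

lemma isCyc_SP5 (k ℓ : ℕ) : IsCyc (SPnat 5 k ℓ) 5 (Finset.range 5) (fun i => i.val) := by
  refine ⟨Fin.val_injective, by ext z; simp [Fin.exists_iff], ?_⟩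
  intro i j
  fin_cases i <;> fin_cases j <;> simp [SPnat] <;> omega

/-- The values of the triangle after deleting none, one or both of the vertices `0`, `2`. -/
lemma IsCyc.IP_three {C : Finset V} {c : Fin 3 → V} (h : IsCyc G 3 C c) {x : ℝ} (hx : -1 < x) :
    IP G C x = (1 + x) ^ 1 * W (-(x / (1 + x))) 3 ∧
    IP G (C.erase (c 2)) x = (1 + x) ^ 1 * W (-(x / (1 + x))) 2 ∧
    IP G (C.erase (c 0)) x = (1 + x) ^ 1 * W (-(x / (1 + x))) 2 ∧
    IP G ((C.erase (c 0)).erase (c 2)) x = (1 + x) ^ 1 * W (-(x / (1 + x))) 1 := by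
  have hx0 : 1 + x ≠ 0 := by linarith
  rw [h.eq3]
  refine ⟨?_, ?_, ?_, ?_⟩ <;>
    simp [IP_insert, IP_empty, IP_singleton, Finset.filter_insert, Finset.filter_singleton, h.2.2,
      h.1.eq_iff, Finset.erase_insert_eq_erase, Finset.erase_insert_of_ne, W] <;>
    field_simp

/-- The values of the 5-cycle after deleting none, one or both of the vertices `0`, `2`. -/
lemma IsCyc.IP_five {C : Finset V} {c : Fin 5 → V} (h : IsCyc G 5 C c) {x : ℝ} (hx : -1 < x) :
    IP G C x = (1 + x) ^ 2 * W (-(x / (1 + x))) 4 ∧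
    IP G (C.erase (c 2)) x = (1 + x) ^ 2 * W (-(x / (1 + x))) 3 ∧
    IP G (C.erase (c 0)) x = (1 + x) ^ 2 * W (-(x / (1 + x))) 3 ∧
    IP G ((C.erase (c 0)).erase (c 2)) x = (1 + x) ^ 2 * W (-(x / (1 + x))) 2 := by
  have hx0 : 1 + x ≠ 0 := by linarith
  rw [h.eq5]
  refine ⟨?_, ?_, ?_, ?_⟩ <;>
    simp [IP_insert, IP_empty, IP_singleton, Finset.filter_insert, Finset.filter_singleton, h.2.2,
      h.1.eq_iff, Finset.erase_insert_eq_erase, Finset.erase_insert_of_ne, W] <;>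
    field_simp <;> ring

/-- Attaching both chains to a cycle of length `2 h + 1` with the given values. -/
lemma IP_SP_aux (g k ℓ h : ℕ) (hg : g = 3 ∨ g = 5) {x : ℝ} (hx : -1 < x)
    (h0 : IP (SPnat g k ℓ) (Finset.range g) x = (1 + x) ^ h * W (-(x / (1 + x))) (h + 2))
    (h1 : IP (SPnat g k ℓ) ((Finset.range g).erase 2) x
      = (1 + x) ^ h * W (-(x / (1 + x))) (h + 1))
    (h2 : IP (SPnat g k ℓ) ((Finset.range g).erase 0) x
      = (1 + x) ^ h * W (-(x / (1 + x))) (h + 1))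
    (h3 : IP (SPnat g k ℓ) (((Finset.range g).erase 0).erase 2) x
      = (1 + x) ^ h * W (-(x / (1 + x))) h) :
    IP (SPnat g k ℓ) (Finset.range (g + 2*k + 2*ℓ)) x
      = (1 + x) ^ (h + k + ℓ) * W (-(x / (1 + x))) (h + k + ℓ + 2) := by
  have t0 := IP_SP_tail g k ℓ hg _ le_rfl hx h0 h1
  have t1 := IP_SP_tail g k ℓ hg _ (Finset.erase_subset 0 _) hx h2 h3
  have hg0 : 0 < g := by omega
  have := (IP_chain (G := SPnat g k ℓ)
    (fun j => (Finset.range g ∪ Finset.Ico (g + 2*k) (g + 2*k + 2*ℓ)) ∪ Finset.Ico g (g + 2*j))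
    (fun j => if j = 0 then 0 else g + 2*(j-1)) (fun j => g + 2*j + 1) k
    ?_ ?_ ?_ ?_ ?_ ?_ (m := h + 1 + ℓ) hx (by simpa [add_right_comm _ ℓ] using t0) ?_ k le_rfl).1
  · rw [show Finset.range (g + 2*k + 2*ℓ) = (Finset.range g ∪ Finset.Ico (g + 2*k)
      (g + 2*k + 2*ℓ)) ∪ Finset.Ico g (g + 2*k) by ext z; simp; omega, this,
      show h + 1 + ℓ + 1 + k = h + k + ℓ + 2 by ring, pow_add _ (h + k), pow_add _ h]
    ring
  · intro j hj
    ext z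
    simp
    omega
  · intro j hj hh
    simp at hh
    omega
  · intro j hj hh
    simp at hh
    omega
  · intro j hj
    simp [SPnat]
    omega
  · intro j hj z hz
    simp at hz
    simp [SPnat]
    split_ifs <;> rcases hg with rfl | rfl <;> omega
  · intro j hj z hz
    simp at hz
    simp [SPnat]
    rcases hg with rfl | rfl <;> omega
  · rw [← t1]
    congr 1
    ext z
    simp
    omega

lemma repF_SP (g k ℓ : ℕ) (hg : g = 3 ∨ g = 5) :
    RepF (fun x => IP (SPgraph g k ℓ) Finset.univ x) (RT.path (g / 2 + k + ℓ)) := by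
  intro x hx
  simp only [IP_SPgraph, RT.sz_path, RT.val_path, Nat.add_sub_cancel]
  rcases hg with rfl | rfl
  · obtain ⟨a, b, c, d⟩ := (isCyc_SP3 k ℓ).IP_three hx
    exact IP_SP_aux 3 k ℓ 1 (by simp) hx a b c d
  · obtain ⟨a, b, c, d⟩ := (isCyc_SP5 k ℓ).IP_five hx
    exact IP_SP_aux 5 k ℓ 2 (by simp) hx a b c d

lemma isCyc_cycleGraph5 : IsCyc (cycleGraph 5) 5 Finset.univ id := by
  refine ⟨fun _ _ h => h, by simp, ?_⟩
  simp only [cycleGraph_adj, id]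
  decide

lemma isCyc_cycleGraph7 : IsCyc (cycleGraph 7) 7 Finset.univ id := by
  refine ⟨fun _ _ h => h, by simp, ?_⟩
  simp only [cycleGraph_adj, id]
  decide

lemma repF_cycle5 : RepF (fun x => IP (cycleGraph 5) Finset.univ x) (RT.path 2) := by
  intro x hx
  simp only [RT.sz_path, RT.val_path]
  exact (isCyc_cycleGraph5.IP_five hx).1

/-- The graph `Mgraph n` with vertex set extended to all natural numbers. -/
def Mnat : SimpleGraph ℕ :=
  SimpleGraph.fromRel (fun i j =>
    (i = 0 ∧ (j ≤ 2 ∨ j % 2 = 1)) ∨ (i = 1 ∧ j = 2) ∨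
    (i % 2 = 1 ∧ 3 ≤ i ∧ j = i + 1))

lemma IP_Mgraph (n : ℕ) (x : ℝ) :
    IP (Mgraph n) Finset.univ x = IP Mnat (Finset.range n) x := by
  rw [← IP_map (H := Mnat) (G := Mgraph n) Fin.valEmbedding]
  · congr 1
    ext z
    simp
  · intro a b
    simp [Mnat, Mgraph, Fin.ext_iff]

lemma IP_Mnat (x : ℝ) (k : ℕ) :
    IP Mnat (Finset.range (2*k + 3)) x = (1 + 2*x) ^ (k + 1) + x * (1 + x) ^ k ∧
    IP Mnat ((Finset.range (2*k + 3)).erase 0) x = (1 + 2*x) ^ (k + 1) := by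
  induction k with
  | zero =>
    have e : Finset.range (2*0 + 3) = {0, 1, 2} := by decide
    rw [e]
    constructor <;>
      simp [IP_insert, IP_empty, IP_singleton, Finset.filter_insert, Finset.filter_singleton, Mnat,
        Finset.erase_insert_eq_erase] <;> ring
  | succ k ih =>
    have e : Finset.range (2*(k+1) + 3)
        = insert (2*k + 3) (insert (2*k + 4) (Finset.range (2*k + 3))) := by
      ext z; simp; omega
    have e' : (Finset.range (2*(k+1) + 3)).erase 0
        = insert (2*k + 3) (insert (2*k + 4) ((Finset.range (2*k + 3)).erase 0)) := by
      ext z; simp; omega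
    have f : ((Finset.range (2*k + 3)).filter fun z => ¬ Mnat.Adj (2*k + 3) z)
        = (Finset.range (2*k + 3)).erase 0 := by
      ext z; simp [Mnat]; omega
    have f' : (((Finset.range (2*k + 3)).erase 0).filter fun z => ¬ Mnat.Adj (2*k + 3) z)
        = (Finset.range (2*k + 3)).erase 0 := by
      ext z; simp [Mnat]; omega
    have a : Mnat.Adj (2*k + 3) (2*k + 4) := by simp [Mnat]
    have v : ∀ z ∈ Finset.range (2*k + 3), ¬ Mnat.Adj (2*k + 4) z := by
      intro z; simp [Mnat]; omega
    rw [e', e, IP_pendant (by simp) (by simp) a v, IP_pendant (by simp) (by simp) a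
      (fun z hz => v z (Finset.mem_of_mem_erase hz)), f, f', ih.1, ih.2]
    constructor <;> ring

lemma repF_M (k : ℕ) :
    RepF (fun x => IP (Mgraph (2*k + 3)) Finset.univ x) (RT.star (k + 1)) := by
  intro x hx
  have hx0 : 1 + x ≠ 0 := by linarith
  have e : 1 - -(x / (1 + x)) = (1 + 2*x) / (1 + x) := by field_simp; ring
  simp only [IP_Mgraph, (IP_Mnat x k).1, RT.sz_star, RT.val, RT.ev_star, Nat.add_sub_cancel, e,
    div_pow]
  field_simp
  ring

end

/-! ### Comparison of the largest roots -/

section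
open Classical
set_option linter.unusedSectionVars false

lemma eval_indepPoly_pos {V : Type*} [Fintype V] (G : SimpleGraph V) {x : ℝ} (hx : 0 ≤ x) :
    0 < (indepPoly G).eval x := by
  rw [eval_indepPoly]
  unfold IP
  refine Finset.sum_pos' (fun s _ => ?_) ⟨∅, by simp, by simp [IsIndepFinset]⟩
  split_ifs
  · positivity
  · exact le_rfl

lemma pos_of_no_root {p : ℝ[X]} (hp : ∀ x, 0 ≤ x → 0 < p.eval x) {z : ℝ}
    (h : ∀ y, z ≤ y → p.eval y ≠ 0) {y : ℝ} (hy : z ≤ y) : 0 < p.eval y := by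
  by_contra! hcon
  have hy0 : y ≤ 0 := by
    by_contra! h0
    exact absurd (hp y h0.le) (not_lt.2 hcon)
  obtain ⟨c, hc, hc0⟩ := intermediate_value_Icc hy0 p.continuous.continuousOn
    ⟨hcon, (hp 0 le_rfl).le⟩
  exact h c (hy.trans hc.1) hc0

/-- Comparison of largest roots by comparison of positivity: every root `z` of the first
polynomial must have a root of the second one in `[z, 0]`. -/
lemma xi_le_xi {V V' : Type*} [Fintype V] [Fintype V'] {H : SimpleGraph V'} {G : SimpleGraph V}
    (hH : ∃ x, (indepPoly H).eval x = 0) (hG : ∃ x, -(1 / 2) ≤ x ∧ (indepPoly G).eval x = 0)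
    (h : ∀ z, -(1 / 2) ≤ z → z < 0 → (∀ y, z ≤ y → 0 < (indepPoly G).eval y) →
      0 < (indepPoly H).eval z) : xi H ≤ xi G := by
  unfold xi
  refine csSup_le hH fun z hz => ?_
  by_contra! hlt
  have hbdd : BddAbove {x : ℝ | (indepPoly G).eval x = 0} := by
    refine ⟨0, fun x hx => ?_⟩
    by_contra! h0
    exact (eval_indepPoly_pos G h0.le).ne' hx
  have hz0 : z < 0 := by
    by_contra! h0
    exact (eval_indepPoly_pos H h0).ne' hz
  obtain ⟨r, hr1, hr⟩ := hG
  have hrz : r < z := (le_csSup hbdd hr).trans_lt hlt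
  refine (h z (by linarith) hz0 fun y hy => ?_).ne' hz
  refine pos_of_no_root (fun x hx => eval_indepPoly_pos G hx) (z := z) (fun w hw h0 => ?_) hy
  exact absurd (le_csSup hbdd h0) (not_le.2 (hlt.trans_le hw))

/-- If the represented function is positive on `[z, ∞)`, then the tree is good at the
corresponding parameter. -/
lemma RepF.good {f : ℝ → ℝ} {t : RT} (h : RepF f t) {z : ℝ} (hz : -1 < z) (hz0 : z ≤ 0)
    (hf : ∀ y, z ≤ y → 0 < f y) : t.Good (-(z / (1 + z))) := by
  have hz1 : 0 < 1 + z := by linarith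
  refine t.good_of_val_pos ?_ ?_
  · rw [← neg_div]
    exact div_nonneg (by linarith) hz1.le
  · rintro l ⟨hl0, hl⟩
    rw [← neg_div, le_div_iff₀ hz1] at hl
    have hl1 : 0 < 1 + l := by linarith
    have hx : z ≤ -l / (1 + l) := by
      rw [le_div_iff₀ hl1]
      linarith
    have e : 1 + -l / (1 + l) = 1 / (1 + l) := by field_simp; ring
    have e2 : -(-l / (1 + l) / (1 / (1 + l))) = l := by field_simp
    have := hf _ hx
    rw [h _ (by linarith), e, e2] at this
    exact (mul_pos_iff_of_pos_left (by positivity)).1 this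

/-- Goodness at the parameter `1`, which corresponds to `z = -1/2`, is impossible. -/
lemma RepF.exists_root {V : Type*} [Fintype V] {G : SimpleGraph V} {t : RT}
    (h : RepF (fun x => IP G Finset.univ x) t) :
    ∃ x, -(1 / 2) ≤ x ∧ (indepPoly G).eval x = 0 := by
  by_contra! hcon
  have hg := h.good (z := -(1 / 2)) (by norm_num) (by norm_num) fun y hy => by
    rw [← eval_indepPoly]
    exact pos_of_no_root (fun x hx => eval_indepPoly_pos G hx) hcon hy
  have h2 := (RT.Good.path_le (by norm_num) hg).1 2 (by have := t.sz_pos; omega)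
  norm_num [W] at h2

lemma IsCyc.exists_root {V : Type*} [Fintype V] [DecidableEq V] {G : SimpleGraph V} {c : Fin 7 → V}
    (h : IsCyc G 7 Finset.univ c) : ∃ x, -(1 / 2) ≤ x ∧ (indepPoly G).eval x = 0 := by
  by_contra! hcon
  have := pos_of_no_root (fun x hx => eval_indepPoly_pos G hx) hcon
    (y := -(3 / 10)) (by norm_num)
  rw [eval_indepPoly, h.IP_seven] at this
  norm_num at this

/-- The seven-cycle is not represented by a tree, but differs from the function represented by the
path on four vertices only by the term `-x ^ 3`, which is positive for `x < 0`. -/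
lemma IsCyc.IP_seven_eq {V : Type*} [Fintype V] [DecidableEq V] {G : SimpleGraph V} {c : Fin 7 → V}
    (h : IsCyc G 7 Finset.univ c) {x : ℝ} (hx : -1 < x) :
    IP G Finset.univ x = (1 + x) ^ 3 * (RT.path 3).val (-(x / (1 + x))) - x ^ 3 := by
  have hx0 : 1 + x ≠ 0 := by linarith
  rw [h.IP_seven, RT.val_path]
  simp only [W]
  field_simp
  ring

lemma IsCyc.pos_of_good {V : Type*} [Fintype V] [DecidableEq V] {G : SimpleGraph V} {c : Fin 7 → V}
    (h : IsCyc G 7 Finset.univ c) {x : ℝ} (hx : -1 < x) (hx0 : x < 0)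
    (hv : 0 < (RT.path 3).val (-(x / (1 + x)))) : 0 < IP G Finset.univ x := by
  rw [h.IP_seven_eq hx]
  have : x ^ 3 < 0 := Odd.pow_neg (by decide) hx0
  have : 0 < (1 + x) ^ 3 := by
    have : 0 < 1 + x := by linarith
    positivity
  have := mul_pos this hv
  linarith

lemma RepF.pos_of_val {f : ℝ → ℝ} {t : RT} (h : RepF f t) {z : ℝ} (hz : -1 < z)
    (hv : 0 < t.val (-(z / (1 + z)))) : 0 < f z := by
  have : 0 < 1 + z := by linarith
  rw [h z hz]
  positivity

lemma param_nonneg {z : ℝ} (hz : -1 < z) (hz0 : z ≤ 0) : 0 ≤ -(z / (1 + z)) := by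
  rw [← neg_div]
  exact div_nonneg (by linarith) (by linarith)

lemma val_path_pos {t : RT} {l : ℝ} (hl : 0 ≤ l) (h : t.Good l) {m : ℕ} (hm : t.sz = m + 1) :
    0 < (RT.path m).val l := by
  rw [RT.val_path]
  exact (h.path_le hl).1 _ (by omega)

lemma val_pos_of_star {t : RT} {l : ℝ} (hl : 0 ≤ l) {m : ℕ} (h : (RT.star m).Good l)
    (hm : t.sz = m + 1) : 0 < t.val l := by
  have h2 := (h.path_le hl).1 2 (by rw [RT.sz_star]; omega)
  have hv := h.val_pos
  simp only [W, RT.val, RT.ev_star, mul_one] at h2 hv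
  refine (t.good_of_star hl (by linarith) ?_).1.val_pos
  rw [hm, Nat.add_sub_cancel]
  linarith

/-- A well-covered unicyclic graph of odd order satisfies the inductive invariant. -/
lemma oddInv_of_unicyclic {V : Type*} [Fintype V] [DecidableEq V] {G : SimpleGraph V}
    (hodd : Odd (Fintype.card V)) (hG : Unicyclic G) (hwc : WellCovered G) :
    OddInv G Finset.univ := by
  refine ⟨by simpa using hodd, ?_, ?_, ?_⟩
  · rintro X - ⟨a, ha⟩ hX
    refine Finset.eq_univ_of_forall fun b => ?_
    obtain ⟨p⟩ := hG.1.preconnected a b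
    induction p with
    | nil => exact ha
    | cons hadj _ ih => exact ih (hX _ ha _ (Finset.mem_univ _) hadj)
  · have h1 := G.sum_degrees_eq_twice_card_edges
    have h2 : G.edgeFinset.card = Fintype.card V := by
      rw [← hG.2, ← SimpleGraph.coe_edgeFinset, Set.ncard_coe_finset]
    rw [h2] at h1
    rw [Finset.card_univ, ← h1]
    refine Finset.sum_congr rfl fun v _ => ?_
    rw [← SimpleGraph.card_neighborFinset_eq_degree]
    congr 1
    ext u
    simp [nb]
  · have key : ∀ s, MaxIndep G Finset.univ s →
        IsIndepFinset G s ∧ ∀ v ∉ s, ¬ IsIndepFinset G (insert v s) := by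
      rintro s ⟨-, h1, h2⟩
      refine ⟨h1, fun v hv hi => ?_⟩
      obtain ⟨u, hu, hvu⟩ := h2 v (Finset.mem_univ _) hv
      exact (isIndep_insert.1 hi).2 u hu hvu
    intro s t hs ht
    refine hwc s t (key s hs).1 (fun v hv hi => (key s hs).2 v hv ?_) (key t ht).1
      (fun v hv hi => (key t ht).2 v hv ?_)
    · convert hi
    · convert hi

end

/-- Let `n` be odd and `G` a connected well-covered unicyclic graph of order
`n`. If `5 ≤ n ≤ 7` then `ξ(C_n) ≤ ξ(G) ≤ ξ(M_n)`; if `n ≥ 9` then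
`ξ(H) ≤ ξ(G) ≤ ξ(M_n)` for every graph `H` of order `n` in the family `S_P`. -/
theorem stmt13 {V : Type*} [Fintype V] (n : ℕ) (hodd : Odd n)
    (G : SimpleGraph V) (hcard : Fintype.card V = n)
    (hG : Unicyclic G) (hwc : WellCovered G) :
    (5 ≤ n → n ≤ 7 → xi (cycleGraph n) ≤ xi G ∧ xi G ≤ xi (Mgraph n)) ∧
    (9 ≤ n → ∀ (W : Type) [Fintype W] (H : SimpleGraph W),
      (∃ g k l : ℕ, (g = 3 ∨ g = 5) ∧ 1 ≤ k + l ∧ g + 2*k + 2*l = n ∧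
        Nonempty (H ≃g SPgraph g k l)) → xi H ≤ xi G ∧ xi G ≤ xi (Mgraph n)) := by
  classical
  have hinv := oddInv_of_unicyclic (by rwa [hcard]) hG hwc
  have hrep : (∃ t : RT, 2 * t.sz = n + 1 ∧ RepF (fun x => IP G Finset.univ x) t) ∨
      (n = 7 ∧ ∃ c, IsCyc G 7 Finset.univ c) := by
    rcases hinv.treeRep with ⟨U, U', hU, hc⟩ | ⟨c, hc⟩
    · obtain ⟨t, ht, hr⟩ := hU.repF
      rw [Finset.card_univ, hcard] at hc
      exact Or.inl ⟨t, by omega, hr⟩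
    · have := hc.card
      rw [Finset.card_univ, hcard] at this
      exact Or.inr ⟨this, c, hc⟩
  have hrootG : ∃ x, -(1 / 2) ≤ x ∧ (indepPoly G).eval x = 0 := by
    rcases hrep with ⟨t, -, hr⟩ | ⟨-, c, hc⟩
    · exact hr.exists_root
    · exact hc.exists_root
  have hex : ∃ x, (indepPoly G).eval x = 0 := hrootG.imp fun _ h => h.2
  have upper : 5 ≤ n → xi G ≤ xi (Mgraph n) := by
    intro hn
    obtain ⟨k, rfl⟩ : ∃ k, n = 2 * k + 3 := by
      obtain ⟨j, hj⟩ := hodd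
      exact ⟨j - 1, by omega⟩
    refine xi_le_xi hex (repF_M k).exists_root fun z hz hz0 hpos => ?_
    simp only [eval_indepPoly] at hpos ⊢
    have hl := param_nonneg (by linarith) hz0.le
    have hgood := (repF_M k).good (by linarith) hz0.le hpos
    rcases hrep with ⟨t, ht, hr⟩ | ⟨h7, c, hc⟩
    · exact hr.pos_of_val (by linarith) (val_pos_of_star hl hgood (by omega))
    · refine hc.pos_of_good (by linarith) hz0 (val_pos_of_star hl hgood ?_)
      rw [RT.sz_path]
      omega
  have lower : ∀ {W' : Type} [Fintype W'] (H : SimpleGraph W') (t : RT) (m : ℕ),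
      2 * t.sz = n + 1 → RepF (fun x => IP G Finset.univ x) t → n = 2 * m + 1 →
      RepF (fun x => IP H Finset.univ x) (RT.path m) → xi H ≤ xi G := by
    intro W' _ H t m ht hr hm hH
    refine xi_le_xi (hH.exists_root.imp fun _ h => h.2) hrootG fun z hz hz0 hpos => ?_
    simp only [eval_indepPoly] at hpos ⊢
    exact hH.pos_of_val (by linarith) (val_path_pos (param_nonneg (by linarith) hz0.le)
      (hr.good (by linarith) hz0.le hpos) (by omega))
  refine ⟨fun h5 h7 => ⟨?_, upper h5⟩, fun h9 W' _ H hH => ⟨?_, upper (by omega)⟩⟩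
  · obtain rfl | rfl : n = 5 ∨ n = 7 := by
      obtain ⟨j, hj⟩ := hodd
      omega
    · obtain ⟨t, ht, hr⟩ := hrep.resolve_right (by omega)
      exact lower _ t 2 ht hr rfl repF_cycle5
    · have hC := isCyc_cycleGraph7
      rcases hrep with ⟨t, ht, hr⟩ | ⟨-, c, hc⟩
      · refine xi_le_xi (hC.exists_root.imp fun _ h => h.2) hrootG fun z hz hz0 hpos => ?_
        simp only [eval_indepPoly] at hpos ⊢
        exact hC.pos_of_good (by linarith) hz0 (val_path_pos
          (param_nonneg (by linarith) hz0.le) (hr.good (by linarith) hz0.le hpos) (by omega))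
      · unfold xi
        simp only [eval_indepPoly, hc.IP_seven, hC.IP_seven]
        exact le_rfl
  · obtain ⟨g, k, l, hg, hkl, hn, ⟨e⟩⟩ := hH
    obtain ⟨t, ht, hr⟩ := hrep.resolve_right (by omega)
    have e1 : xi H = xi (SPgraph g k l) := by
      unfold xi
      rw [eval_indepPoly_iso e]
    rw [e1]
    exact lower _ t (g / 2 + k + l) ht hr (by omega) (repF_SP g k l hg)
end

section
/- For every integer n ≥ 6, I(P_n*,x) = I(G_{2n},x) as polynomials. -/
/-!
Both graphs are realised inside `ℕ ⊕ ℕ` on the vertex set `ladder n` consisting of `inl i` and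
`inr i` for `i < n`, as finite pieces of two fixed infinite graphs: `starModel` for `P_n*` and
`treeModel` for `G_{2n}` (`inl i` is the path vertex `v_{i+1}`; in `treeModel` the five vertices
`inr 0, …, inr 4` are `z_1, y_1, y_2, x_1, x_2`, and `inr i` is the pendant `w_{i+1}` for
`i ≥ 5`).

For `n ≥ 5` both models grow in the same way: `inl n` is joined, among earlier vertices, only to
`inl (n - 1)`, and `inr n` is a leaf attached to `inl n`. Writing `S_n` for the independence
polynomial of the piece on `ladder n` and `T_n` for that of the piece with the last path vertex
`inl (n - 1)` removed, deletion of `inl n` gives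
`S_{n+1} = (1 + X) S_n + X T_n` and `T_{n+1} = (1 + X) S_n`.
Hence it suffices that `S_5` and `T_5` agree for the two models, and these four polynomials are
computed by the deletion recursion (`indepPolyOn_insert`).
-/


open Polynomial SimpleGraph

open Finset

open Classical in
/-- The independence polynomial of the subgraph of `G` induced on the finite vertex set `S`. -/
noncomputable def indepPolyOn {V : Type*} (G : SimpleGraph V) (S : Finset V) : Polynomial ℝ :=
  ∑ s ∈ S.powerset, if IsIndepFinset G s then (X : Polynomial ℝ) ^ s.card else 0

lemma indepPolyOn_empty {V : Type*} (G : SimpleGraph V) : indepPolyOn G ∅ = 1 := by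
  simp [indepPolyOn, IsIndepFinset]

lemma indepPolyOn_singleton {V : Type*} (G : SimpleGraph V) (v : V) :
    indepPolyOn G {v} = 1 + X := by
  classical
  have h : ({v} : Finset V).powerset = {∅, {v}} := by
    ext s
    simp [Finset.subset_singleton_iff]
  simp [indepPolyOn, h, IsIndepFinset, Finset.sum_pair (Finset.singleton_ne_empty v).symm]

lemma indepPoly_eq_indepPolyOn {V W : Type*} [Fintype V] (G : SimpleGraph V)
    (H : SimpleGraph W) (f : V ↪ W) (hf : ∀ a b, G.Adj a b ↔ H.Adj (f a) (f b)) :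
    indepPoly G = indepPolyOn H (univ.map f) := by
  classical
  unfold indepPoly indepPolyOn
  refine Finset.sum_nbij (fun s => s.map f) ?_ ?_ ?_ ?_
  · intro s _
    simp
  · intro s _ t _ h
    exact Finset.map_injective f h
  · intro t ht
    obtain ⟨u, _, rfl⟩ := Finset.subset_map_iff.1 (Finset.mem_powerset.1 ht)
    exact ⟨u, by simp, rfl⟩
  · intro s _
    simp [IsIndepFinset, hf]

/-- Deletion recursion: an independent subset of `insert v S` either avoids `v`, or consists of
`v` and an independent set of non-neighbours of `v`. -/
lemma indepPolyOn_insert {V : Type*} [DecidableEq V] (G : SimpleGraph V) [DecidableRel G.Adj]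
    (v : V) (S : Finset V) (hv : v ∉ S) :
    indepPolyOn G (insert v S) =
      indepPolyOn G S + X * indepPolyOn G (S.filter fun u => ¬ G.Adj v u) := by
  unfold indepPolyOn
  rw [Finset.sum_powerset_insert hv, Finset.mul_sum]
  congr 1
  symm
  apply Finset.sum_subset_zero_on_sdiff
  · exact Finset.powerset_mono.2 (Finset.filter_subset _ _)
  · intro t ht
    rw [Finset.mem_sdiff, Finset.mem_powerset, Finset.mem_powerset] at ht
    obtain ⟨hS, hN⟩ := ht
    rw [if_neg]
    intro hI
    apply hN
    intro u hu
    exact Finset.mem_filter.2 ⟨hS hu, hI v (by simp) u (by simp [hu])⟩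
  · intro t ht
    rw [Finset.mem_powerset] at ht
    have hvt : v ∉ t := fun h => hv (Finset.mem_filter.1 (ht h)).1
    have hN : ∀ u ∈ t, ¬ G.Adj v u := fun u hu => (Finset.mem_filter.1 (ht hu)).2
    have key : IsIndepFinset G (insert v t) ↔ IsIndepFinset G t := by
      constructor
      · intro h a ha b hb
        exact h a (by simp [ha]) b (by simp [hb])
      · intro h a ha b hb
        rcases Finset.mem_insert.1 ha with rfl | ha'
        · rcases Finset.mem_insert.1 hb with rfl | hb'
          · exact G.irrefl
          · exact hN b hb'
        · rcases Finset.mem_insert.1 hb with rfl | hb'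
          · exact fun hab => hN a ha' hab.symm
          · exact h a ha' b hb'
    by_cases hI : IsIndepFinset G t
    · rw [if_pos hI, if_pos (key.2 hI), Finset.card_insert_of_notMem hvt, pow_succ']
    · rw [if_neg hI, if_neg (mt key.1 hI), mul_zero]

/-- The vertices `inl i` and `inr i` with `i < n`. -/
def ladder (n : ℕ) : Finset (ℕ ⊕ ℕ) := (range n).disjSum (range n)

lemma ladder_succ (n : ℕ) :
    ladder (n + 1) = insert (Sum.inl n) (insert (Sum.inr n) (ladder n)) := by
  ext (a | a) <;> simp [ladder] <;> omega

/-- Condition under which passing from `ladder n` to `ladder (n + 1)` attaches a new path vertex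
`inl n` to the previous one and a new pendant vertex `inr n` to `inl n`, for every `n ≥ 5`. -/
def GrowsAsStar (G : SimpleGraph (ℕ ⊕ ℕ)) : Prop :=
  ∀ n, 5 ≤ n → G.Adj (Sum.inl n) (Sum.inr n) ∧
    (∀ u ∈ ladder n, G.Adj (Sum.inl n) u ↔ u = Sum.inl (n - 1)) ∧
    (∀ u ∈ ladder n, ¬ G.Adj (Sum.inr n) u)

lemma indepPolyOn_insert_isolated {V : Type*} [DecidableEq V] (G : SimpleGraph V) (v : V)
    (S : Finset V) (hv : v ∉ S) (hN : ∀ u ∈ S, ¬ G.Adj v u) :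
    indepPolyOn G (insert v S) = (1 + X) * indepPolyOn G S := by
  classical
  have h := indepPolyOn_insert G v S hv
  rw [Finset.filter_true_of_mem hN] at h
  rw [h]
  ring

lemma ladder_succ_recursion {G : SimpleGraph (ℕ ⊕ ℕ)} (hG : GrowsAsStar G) (n : ℕ) (hn : 5 ≤ n) :
    indepPolyOn G (ladder (n + 1)) = (1 + X) * indepPolyOn G (ladder n)
      + X * indepPolyOn G ((ladder n).erase (Sum.inl (n - 1))) ∧
    indepPolyOn G ((ladder (n + 1)).erase (Sum.inl n)) = (1 + X) * indepPolyOn G (ladder n) := by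
  classical
  obtain ⟨h1, h2, h3⟩ := hG n hn
  have hl : Sum.inl n ∉ insert (Sum.inr n) (ladder n) := by simp [ladder]
  have hr : Sum.inr n ∉ ladder n := by simp [ladder]
  have hiso := indepPolyOn_insert_isolated G _ _ hr h3
  have hfil : (insert (Sum.inr n) (ladder n)).filter (fun u => ¬ G.Adj (Sum.inl n) u)
      = (ladder n).erase (Sum.inl (n - 1)) := by
    rw [Finset.filter_insert, if_neg (by simpa using h1)]
    ext u
    simp only [Finset.mem_filter, Finset.mem_erase]
    constructor
    · rintro ⟨hu, ha⟩
      exact ⟨fun h => ha ((h2 u hu).2 h), hu⟩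
    · rintro ⟨hne, hu⟩
      exact ⟨hu, fun h => hne ((h2 u hu).1 h)⟩
  have hdel := indepPolyOn_insert G _ _ hl
  rw [hfil] at hdel
  rw [ladder_succ]
  constructor
  · rw [hdel, hiso]
  · rw [Finset.erase_insert hl, hiso]

lemma indepPolyOn_ladder_eq {G H : SimpleGraph (ℕ ⊕ ℕ)} (hG : GrowsAsStar G)
    (hH : GrowsAsStar H)
    (hS : indepPolyOn G (ladder 5) = indepPolyOn H (ladder 5))
    (hT : indepPolyOn G ((ladder 5).erase (Sum.inl 4))
      = indepPolyOn H ((ladder 5).erase (Sum.inl 4))) (n : ℕ) (hn : 5 ≤ n) :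
    indepPolyOn G (ladder n) = indepPolyOn H (ladder n) ∧
    indepPolyOn G ((ladder n).erase (Sum.inl (n - 1)))
      = indepPolyOn H ((ladder n).erase (Sum.inl (n - 1))) := by
  induction n, hn using Nat.le_induction with
  | base => exact ⟨hS, hT⟩
  | succ n hn ih =>
    obtain ⟨hG1, hG2⟩ := ladder_succ_recursion hG n hn
    obtain ⟨hH1, hH2⟩ := ladder_succ_recursion hH n hn
    rw [Nat.add_sub_cancel, hG1, hG2, hH1, hH2, ih.1, ih.2]
    exact ⟨rfl, rfl⟩

/-- The edges of `starModel`, each listed in one direction. -/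
def starRel (a b : ℕ ⊕ ℕ) : Prop :=
  match a, b with
  | Sum.inl u, Sum.inl v => u + 1 = v
  | Sum.inl u, Sum.inr v => u = v
  | _, _ => False

/-- The corona of the one-way infinite path; its piece on `ladder n` is `P_n*`. -/
def starModel : SimpleGraph (ℕ ⊕ ℕ) :=
  SimpleGraph.fromRel starRel

lemma starModel_adj (a b : ℕ ⊕ ℕ) :
    starModel.Adj a b ↔ a ≠ b ∧ (starRel a b ∨ starRel b a) :=
  SimpleGraph.fromRel_adj _ _ _

/-- The edges of `treeModel`, each listed in one direction. -/
def treeRel (a b : ℕ ⊕ ℕ) : Prop :=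
  match a, b with
  | Sum.inl u, Sum.inl v => u + 1 = v
  | Sum.inl u, Sum.inr v =>
        (u = 2 ∧ (v = 0 ∨ v = 1)) ∨ (u = 4 ∧ v = 3) ∨ (5 ≤ u ∧ u = v)
  | Sum.inr u, Sum.inr v => (u = 1 ∧ v = 2) ∨ (u = 3 ∧ v = 4)
  | _, _ => False

/-- The infinite tree whose piece on `ladder n`, for `n ≥ 5`, is `G_{2n}`; the path is
`inl 0, inl 1, …`, and `inr i` stands for the vertex with index `n + i` of `Gtree n`. -/
def treeModel : SimpleGraph (ℕ ⊕ ℕ) :=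
  SimpleGraph.fromRel treeRel

lemma treeModel_adj (a b : ℕ ⊕ ℕ) :
    treeModel.Adj a b ↔ a ≠ b ∧ (treeRel a b ∨ treeRel b a) :=
  SimpleGraph.fromRel_adj _ _ _

lemma starModel_growsAsStar : GrowsAsStar starModel := by
  intro n hn
  refine ⟨by simp [starModel_adj, starRel], ?_, ?_⟩ <;> rintro (u | u) hu <;>
    simp [starModel_adj, starRel, ladder] at hu ⊢ <;> omega

lemma treeModel_growsAsStar : GrowsAsStar treeModel := by
  intro n hn
  refine ⟨by simp [treeModel_adj, treeRel]; omega, ?_, ?_⟩ <;> rintro (u | u) hu <;>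
    simp [treeModel_adj, treeRel, ladder] at hu ⊢ <;> omega

lemma ladder_five_erase : (ladder 5).erase (Sum.inl 4) =
    {Sum.inl 0, Sum.inl 1, Sum.inl 2, Sum.inl 3,
      Sum.inr 0, Sum.inr 1, Sum.inr 2, Sum.inr 3, Sum.inr 4} := by
  decide

lemma ladder_five : ladder 5 =
    {Sum.inl 4, Sum.inl 0, Sum.inl 1, Sum.inl 2, Sum.inl 3,
      Sum.inr 0, Sum.inr 1, Sum.inr 2, Sum.inr 3, Sum.inr 4} := by
  decide

set_option maxHeartbeats 4000000 in
lemma indepPolyOn_erase_five_eq : indepPolyOn starModel ((ladder 5).erase (Sum.inl 4)) =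
    indepPolyOn treeModel ((ladder 5).erase (Sum.inl 4)) := by
  classical
  rw [ladder_five_erase]
  simp [indepPolyOn_insert, indepPolyOn_empty, Finset.filter_insert, Finset.filter_singleton,
    indepPolyOn_singleton, starModel_adj, starRel, treeModel_adj, treeRel]
  ring

set_option maxHeartbeats 4000000 in
lemma indepPolyOn_five_eq : indepPolyOn starModel (ladder 5) =
    indepPolyOn treeModel (ladder 5) := by
  classical
  rw [ladder_five]
  simp [indepPolyOn_insert, indepPolyOn_empty, Finset.filter_insert, Finset.filter_singleton,
    indepPolyOn_singleton, starModel_adj, starRel, treeModel_adj, treeRel]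
  ring

lemma indepPoly_corona_pathGraph (n : ℕ) :
    indepPoly (corona (pathGraph n)) = indepPolyOn starModel (ladder n) := by
  rw [indepPoly_eq_indepPolyOn _ starModel
    (Fin.valEmbedding.sumMap Fin.valEmbedding)]
  · congr 1
    ext (a | a) <;> simp [ladder, Fin.exists_iff]
  · rintro (a | a) (b | b) <;>
      simp [corona, starModel_adj, starRel, pathGraph_adj, Fin.ext_iff] <;> omega

/-- The bijection from `Fin (2 * n)` to `ladder n` sending `i < n` to `inl i` and `n + i` to
`inr i`, as an embedding into `ℕ ⊕ ℕ`. -/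
def treeEmbedding (n : ℕ) : Fin (2 * n) ↪ ℕ ⊕ ℕ where
  toFun i := if i.val < n then Sum.inl i.val else Sum.inr (i.val - n)
  inj' := by
    intro a b h
    dsimp only at h
    split_ifs at h <;> simp at h <;> omega

lemma treeEmbedding_apply (n : ℕ) (i : Fin (2 * n)) :
    treeEmbedding n i = if i.val < n then Sum.inl i.val else Sum.inr (i.val - n) := rfl

lemma indepPoly_Gtree (n : ℕ) (hn : 5 ≤ n) :
    indepPoly (Gtree n) = indepPolyOn treeModel (ladder n) := by
  rw [indepPoly_eq_indepPolyOn _ treeModel (treeEmbedding n)]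
  · congr 1
    ext v
    simp only [Finset.mem_map, Finset.mem_univ, true_and, treeEmbedding_apply]
    constructor
    · rintro ⟨i, rfl⟩
      split_ifs <;> simp [ladder] <;> omega
    · rcases v with a | a <;> intro ha <;> simp [ladder] at ha
      · exact ⟨⟨a, by omega⟩, by simp [ha]⟩
      · exact ⟨⟨n + a, by omega⟩, by simp⟩
  · intro a b
    simp only [treeEmbedding_apply, Gtree]
    split_ifs <;> simp [treeModel_adj, treeRel, Fin.ext_iff] <;> grind (splits := 30)

/-- For every `n ≥ 6`, `I(P_n*, x) = I(G_{2n}, x)`. -/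
theorem stmt14 (n : ℕ) (hn : 6 ≤ n) :
    indepPoly (corona (pathGraph n)) = indepPoly (Gtree n) := by
  rw [indepPoly_corona_pathGraph, indepPoly_Gtree n (by omega)]
  exact (indepPolyOn_ladder_eq starModel_growsAsStar treeModel_growsAsStar
    indepPolyOn_five_eq indepPolyOn_erase_five_eq n (by omega)).1
end

section
/- Let T_1 be the tree on vertex set {1,…,8} with edges 12, 16, 23, 24, 25, 67, 68, and let T_2 be the tree on vertex set {1,…,8} with edges 12, 14, 15, 16, 23, 57, 68. Then T_1 and T_2 are incomparable with respect to ⪯: neither T_1 ⪯ T_2 nor T_2 ⪯ T_1 holds. -/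
/-!
Counting independent sets by size gives
`I(T₁,x) = 1 + 8x + 21x² + 24x³ + 16x⁴ + 6x⁵ + x⁶` and
`I(T₂,x) = 1 + 8x + 21x² + 23x³ + 9x⁴`, so that
`I(T₁,x) - I(T₂,x) = x³ (1 + 7x + 6x² + x³)` changes sign on `(-1/5, -1/10)`.
The polynomials are positive on `(-1/5, ∞)` (for `T₁`) and `(-1/10, ∞)` (for `T₂`), so
`-1/5 ∈ [ξ(T₁), 0]` and `-1/10 ∈ [ξ(T₂), 0]`; evaluating the difference at these two points
refutes both comparisons. As `ξ` is a supremum, which is `0` for the empty set, a real root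
of each polynomial is also exhibited.
-/

open Polynomial SimpleGraph

/-- The tree `T₁` on `{1,…,8}` (here `0`-indexed) with edges
`12, 16, 23, 24, 25, 67, 68`. -/
def T1 : SimpleGraph (Fin 8) :=
  SimpleGraph.fromRel (fun i j =>
    (i.val, j.val) ∈ ([(0,1),(0,5),(1,2),(1,3),(1,4),(5,6),(5,7)] : List (ℕ × ℕ)))

/-- The tree `T₂` on `{1,…,8}` (here `0`-indexed) with edges
`12, 14, 15, 16, 23, 57, 68`. -/
def T2 : SimpleGraph (Fin 8) :=
  SimpleGraph.fromRel (fun i j =>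
    (i.val, j.val) ∈ ([(0,1),(0,3),(0,4),(0,5),(1,2),(4,6),(5,7)] : List (ℕ × ℕ)))

/-- The number of independent sets of size `k`, the coefficient of `x ^ k` in `indepPoly G`. -/
def indepCount {n : ℕ} (G : SimpleGraph (Fin n)) [DecidableRel G.Adj] (k : ℕ) : ℕ :=
  (Finset.univ.filter fun s : Finset (Fin n) =>
    s.card = k ∧ ∀ u ∈ s, ∀ v ∈ s, ¬ G.Adj u v).card

lemma eval_indepPoly_s16 {n : ℕ} (G : SimpleGraph (Fin n)) [DecidableRel G.Adj] (x : ℝ) :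
    (indepPoly G).eval x = ∑ k ∈ Finset.range (n + 1), (indepCount G k : ℝ) * x ^ k := by
  classical
  have hcard : ∀ s ∈ (Finset.univ : Finset (Finset (Fin n))), s.card ∈ Finset.range (n + 1) := by
    intro s _
    have := Finset.card_le_univ s
    rw [Fintype.card_fin] at this
    exact Finset.mem_range.2 (by omega)
  rw [indepPoly, Polynomial.eval_finsetSum, ← Finset.sum_fiberwise_of_maps_to hcard]
  refine Finset.sum_congr rfl fun k _ => ?_
  rw [indepCount, ← nsmul_eq_mul, ← Finset.sum_const, ← Finset.filter_filter,
    Finset.sum_filter (fun s : Finset (Fin n) => ∀ u ∈ s, ∀ v ∈ s, ¬ G.Adj u v)]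
  refine Finset.sum_congr rfl fun s hs => ?_
  rw [(Finset.mem_filter.1 hs).2]
  by_cases h : IsIndepFinset G s
  · rw [if_pos h, if_pos (by exact h), Polynomial.eval_pow, Polynomial.eval_X]
  · rw [if_neg h, if_neg (by exact h), Polynomial.eval_zero]

instance : DecidableRel T1.Adj := fun i j => by
  unfold T1
  simp only [SimpleGraph.fromRel_adj]
  infer_instance

instance : DecidableRel T2.Adj := fun i j => by
  unfold T2
  simp only [SimpleGraph.fromRel_adj]
  infer_instance

lemma indepCount_T1 :
    (List.range 9).map (indepCount T1) = [1, 8, 21, 24, 16, 6, 1, 0, 0] := by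
  decide +kernel

lemma indepCount_T2 :
    (List.range 9).map (indepCount T2) = [1, 8, 21, 23, 9, 0, 0, 0, 0] := by
  decide +kernel

lemma eval_T1 (x : ℝ) : (indepPoly T1).eval x =
    1 + 8 * x + 21 * x ^ 2 + 24 * x ^ 3 + 16 * x ^ 4 + 6 * x ^ 5 + x ^ 6 := by
  have h := indepCount_T1
  simp only [List.range_succ, List.range_zero, List.nil_append, List.cons_append, List.map_cons,
    List.map_nil, List.cons.injEq, and_true] at h
  obtain ⟨h0, h1, h2, h3, h4, h5, h6, h7, h8⟩ := h
  rw [eval_indepPoly_s16]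
  simp only [Finset.sum_range_succ, Finset.sum_range_zero, h0, h1, h2, h3, h4, h5, h6, h7, h8]
  push_cast
  ring

lemma eval_T2 (x : ℝ) : (indepPoly T2).eval x =
    1 + 8 * x + 21 * x ^ 2 + 23 * x ^ 3 + 9 * x ^ 4 := by
  have h := indepCount_T2
  simp only [List.range_succ, List.range_zero, List.nil_append, List.cons_append, List.map_cons,
    List.map_nil, List.cons.injEq, and_true] at h
  obtain ⟨h0, h1, h2, h3, h4, h5, h6, h7, h8⟩ := h
  rw [eval_indepPoly_s16]
  simp only [Finset.sum_range_succ, Finset.sum_range_zero, h0, h1, h2, h3, h4, h5, h6, h7, h8]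
  push_cast
  ring

lemma xi_T1_le : xi T1 ≤ -1 / 5 := by
  apply csSup_le
  · -- `I(T₁, -1/4) < 0 < I(T₁, 0)`
    have hivt := intermediate_value_Icc (show (-1 / 4 : ℝ) ≤ 0 by norm_num)
      (indepPoly T1).continuous.continuousOn
    obtain ⟨x, -, hx⟩ := hivt (show (0 : ℝ) ∈ _ by
      constructor <;> rw [eval_T1] <;> norm_num)
    exact ⟨x, hx⟩
  · intro x hx
    rw [Set.mem_ofPred_eq, eval_T1] at hx
    by_contra! hlt
    -- Expanding around `-1/5`, all coefficients are positive.
    obtain ⟨y, hy, rfl⟩ : ∃ y : ℝ, 0 < y ∧ x = y - 1 / 5 := ⟨x + 1 / 5, by linarith, by ring⟩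
    ring_nf at hx
    have : 0 < y ^ 2 := by positivity
    have : 0 < y ^ 3 := by positivity
    have : 0 < y ^ 4 := by positivity
    have : 0 < y ^ 5 := by positivity
    have : 0 < y ^ 6 := by positivity
    linarith

lemma xi_T2_le : xi T2 ≤ -1 / 10 := by
  apply csSup_le
  · exact ⟨-1, by rw [Set.mem_ofPred_eq, eval_T2]; norm_num⟩
  · intro x hx
    rw [Set.mem_ofPred_eq, eval_T2] at hx
    by_contra! hlt
    -- Expanding around `-1/10`, all coefficients are positive.
    obtain ⟨y, hy, rfl⟩ : ∃ y : ℝ, 0 < y ∧ x = y - 1 / 10 := ⟨x + 1 / 10, by linarith, by ring⟩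
    ring_nf at hx
    have : 0 < y ^ 2 := by positivity
    have : 0 < y ^ 3 := by positivity
    have : 0 < y ^ 4 := by positivity
    linarith

/-- `T₁` and `T₂` are incomparable with respect to `⪯`. -/
theorem stmt16 : ¬ Pre T1 T2 ∧ ¬ Pre T2 T1 := by
  constructor
  · intro h
    have := h (-1 / 10) ⟨xi_T2_le, by norm_num⟩
    rw [eval_T1, eval_T2] at this
    norm_num at this
  · intro h
    have := h (-1 / 5) ⟨xi_T1_le, by norm_num⟩
    rw [eval_T1, eval_T2] at this
    norm_num at this
end
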